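/- Strict monotonicity in the potential: Let V₁, V₂ : Ω → ℝ be measurable functions, each bounded on every compact subset of Ω, with V₁ ≤ V₂ almost everywhere and such that the set {x ∈ Ω : V₁(x) < V₂(x)} has positive Lebesgue measure. If Q_{V₁}(u) ≥ 0 for every u ∈ C_c^∞(Ω), then Q_{V₂} has a weighted spectral gap in Ω: there exists a continuous function W : Ω → ℝ with W > 0 everywhere such that Q_{V₂}(u) ≥ ∫_Ω W|u|^p dx for all u ∈ C_c^∞(Ω). -/

import Mathlib

open MeasureTheory Filter
open scoped RealInnerProductSpace Topology

noncomputable section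

/-- Euclidean space `ℝ^d`. -/
abbrev Euc (d : ℕ) := EuclideanSpace ℝ (Fin d)

/-- A test function on `Ω`: smooth with compact support contained in `Ω`. -/
def IsTestFun {d : ℕ} (Ω : Set (Euc d)) (u : Euc d → ℝ) : Prop :=
  ContDiff ℝ (⊤ : ℕ∞) u ∧ HasCompactSupport u ∧ tsupport u ⊆ Ω

/-- The energy functional `Q(u) = ∫_Ω (|∇u|^p + V |u|^p) dx`. -/
def energyQ {d : ℕ} (Ω : Set (Euc d)) (V : Euc d → ℝ) (p : ℝ) (u : Euc d → ℝ) : ℝ :=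
  ∫ x in Ω, (‖gradient u x‖ ^ p + V x * |u x| ^ p)

/-- `V` is measurable and bounded on every compact subset of `Ω`. -/
def LocBddPotential {d : ℕ} (Ω : Set (Euc d)) (V : Euc d → ℝ) : Prop :=
  Measurable V ∧ ∀ K : Set (Euc d), K ⊆ Ω → IsCompact K → ∃ C : ℝ, ∀ x ∈ K, |V x| ≤ C

/-- A positive supersolution of `Q'(u) = 0` in `Ω`. -/
def IsPositiveSupersolution {d : ℕ} (Ω : Set (Euc d)) (V : Euc d → ℝ) (p : ℝ)
    (v : Euc d → ℝ) : Prop :=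
  ContDiffOn ℝ 1 v Ω ∧ (∀ x ∈ Ω, 0 < v x) ∧
    ∀ φ : Euc d → ℝ, IsTestFun Ω φ → (∀ x, 0 ≤ φ x) →
      0 ≤ ∫ x in Ω, (‖gradient v x‖ ^ (p - 2) * ⟪gradient v x, gradient φ x⟫
            + V x * v x ^ (p - 1) * φ x)

/-- A positive (weak) solution of `Q'(u) = 0` in `Ω`. -/
def IsPositiveSolution {d : ℕ} (Ω : Set (Euc d)) (V : Euc d → ℝ) (p : ℝ)
    (v : Euc d → ℝ) : Prop :=
  ContDiffOn ℝ 1 v Ω ∧ (∀ x ∈ Ω, 0 < v x) ∧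
    ∀ φ : Euc d → ℝ, IsTestFun Ω φ →
      (∫ x in Ω, (‖gradient v x‖ ^ (p - 2) * ⟪gradient v x, gradient φ x⟫
            + V x * v x ^ (p - 1) * φ x)) = 0

/-- A null sequence for the functional `Q`. -/
def IsNullSequence {d : ℕ} (Ω : Set (Euc d)) (V : Euc d → ℝ) (p : ℝ)
    (u : ℕ → Euc d → ℝ) : Prop :=
  (∀ k, IsTestFun Ω (u k)) ∧ (∀ k x, 0 ≤ u k x) ∧
    ∃ B : Set (Euc d), IsOpen B ∧ IsCompact (closure B) ∧ closure B ⊆ Ω ∧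
      (∀ k, (∫ x in B, u k x ^ p) = 1) ∧
      Tendsto (fun k => energyQ Ω V p (u k)) atTop (𝓝 0)

/-- A ground state of `Q`: a positive `C¹` function on `Ω` which is the limit in
`L^p_loc(Ω)` of a null sequence. -/
def IsGroundState {d : ℕ} (Ω : Set (Euc d)) (V : Euc d → ℝ) (p : ℝ)
    (v : Euc d → ℝ) : Prop :=
  ContDiffOn ℝ 1 v Ω ∧ (∀ x ∈ Ω, 0 < v x) ∧
    ∃ u : ℕ → Euc d → ℝ, IsNullSequence Ω V p u ∧
      ∀ K : Set (Euc d), K ⊆ Ω → IsCompact K →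
        Tendsto (fun k => ∫ x in K, |u k x - v x| ^ p) atTop (𝓝 0)

/-- `Q` has a weighted spectral gap (is strictly positive) in `Ω`. -/
def HasSpectralGap {d : ℕ} (Ω : Set (Euc d)) (V : Euc d → ℝ) (p : ℝ) : Prop :=
  ∃ W : Euc d → ℝ, ContinuousOn W Ω ∧ (∀ x ∈ Ω, 0 < W x) ∧
    ∀ u : Euc d → ℝ, IsTestFun Ω u → (∫ x in Ω, W x * |u x| ^ p) ≤ energyQ Ω V p u

/-- `c_B`: the infimum of `Q(u)` over test functions with `∫_B |u|^p = 1`. -/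
def cB {d : ℕ} (Ω B : Set (Euc d)) (V : Euc d → ℝ) (p : ℝ) : ℝ :=
  sInf { q : ℝ | ∃ u : Euc d → ℝ, IsTestFun Ω u ∧ (∫ x in B, |u x| ^ p) = 1 ∧
    q = energyQ Ω V p u }

/-- The Picone Lagrangian `L(u,v)`. -/
def piconeL {d : ℕ} (p : ℝ) (u v : Euc d → ℝ) (x : Euc d) : ℝ :=
  ‖gradient u x‖ ^ p + (p - 1) * (u x / v x) ^ p * ‖gradient v x‖ ^ p
    - p * (u x / v x) ^ (p - 1) *
        (‖gradient v x‖ ^ (p - 2) * ⟪gradient u x, gradient v x⟫)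

/-!
The energy `∫ |∇u|^p` is convex in `|u|^p`: passing from `u` to `w = (|u|^p + ζ)^(1/p)`, where `ζ`
is a cutoff function, raises it by at most the energy of `ζ^(1/p)`, and a fixed multiple of
`∫ |∇ log (1 + |u|^p)^(1/p)|^p` is saved where `ζ = 1`. As `Q(w) ≥ 0`, the logarithm has gradient
energy at most `O(|B|)` on every ball `B` with `Q(u) ≤ |B|`.

Suppose `∫_E |u|^p ≤ C Q(u)` for some set `E` of positive measure. By Poincaré's inequality along a
chain of balls of radii `R / 2^k`, the averages of the logarithm starting from `E` grow at most
linearly in `k`, so `|u|` lies below `A L^k` on half of each ball of radius `R / 2^k`. Poincaré's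
inequality at such a small scale bounds `∫_B |u|^p` by these levels and a small multiple of the
gradient energy, which is absorbed by Caccioppoli's inequality (`Q((1 - ζ) u) ≥ 0`) and an iteration
over radii. Hence `Q` controls `|u|^p` on a ball around `E`, and by connectedness near every point
of `Ω`. Here `Q = Q_{V₂}` and `E` is a piece of a set on which `V₂ - V₁ ≥ c > 0`, where
`c ∫_E |u|^p ≤ Q_{V₂}(u) - Q_{V₁}(u)`. The weight is a sum of small bumps over a countable cover.
-/

open Module Set Metric
open scoped ENNReal

section Poincare

variable {E F : Type*} [NormedAddCommGroup E] [NormedSpace ℝ E]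
  [NormedAddCommGroup F] [NormedSpace ℝ F]

theorem rpow_lintegral_le_lintegral_rpow {α : Type*} {m : MeasurableSpace α} {μ : Measure α}
    [IsProbabilityMeasure μ] {f : α → ℝ≥0∞} (hf : AEMeasurable f μ) {p : ℝ} (hp : 1 ≤ p) :
    (∫⁻ x, f x ∂μ) ^ p ≤ ∫⁻ x, f x ^ p ∂μ := by
  have h := eLpNorm'_le_eLpNorm'_of_exponent_le one_pos hp μ hf.aestronglyMeasurable
  simp only [eLpNorm', enorm_eq_self, ENNReal.rpow_one, div_one, one_div] at h
  rwa [ENNReal.le_rpow_inv_iff (by positivity)] at h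

theorem enorm_average_sub_rpow_le {α : Type*} {m : MeasurableSpace α} {μ : Measure α}
    [IsFiniteMeasure μ] [NeZero μ] [CompleteSpace F] {f : α → F} (hf : Integrable f μ) (c : F)
    {p : ℝ} (hp : 1 ≤ p) : ‖(⨍ x, f x ∂μ) - c‖ₑ ^ p ≤ ⨍⁻ x, ‖f x - c‖ₑ ^ p ∂μ := by
  have havg : (⨍ x, f x ∂μ) - c = ⨍ x, (f x - c) ∂μ := by
    nth_rw 1 [← average_const μ c]
    simp only [average_eq, integral_sub hf (integrable_const c), smul_sub]
  rw [havg]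
  have hfc : AEMeasurable (fun x ↦ ‖f x - c‖ₑ) ((μ univ)⁻¹ • μ) :=
    ((hf.aestronglyMeasurable.sub aestronglyMeasurable_const).enorm).smul_measure _
  exact (ENNReal.rpow_le_rpow (enorm_integral_le_lintegral_enorm _) (by positivity)).trans
    (rpow_lintegral_le_lintegral_rpow hfc hp)

theorem enorm_sub_rpow_le_lintegral_segment [CompleteSpace F] {v : E → F} (hv : ContDiff ℝ 1 v)
    {p : ℝ} (hp : 1 ≤ p) (x y : E) :
    ‖v y - v x‖ₑ ^ p ≤
      edist x y ^ p * ∫⁻ t in Ioc (0 : ℝ) 1, ‖fderiv ℝ v ((1 - t) • x + t • y)‖ₑ ^ p := by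
  have : Continuous (fderiv ℝ v) := hv.continuous_fderiv one_ne_zero
  have hline : ∀ t : ℝ, HasDerivAt (fun t : ℝ ↦ (1 - t) • x + t • y) (y - x) t := fun t ↦ by
    simpa only [funext fun t : ℝ ↦ AffineMap.lineMap_apply_module x y t] using
      AffineMap.hasDerivAt_lineMap (a := x) (b := y) (x := t)
  have hftc : v y - v x = ∫ t in Ioc (0 : ℝ) 1, fderiv ℝ v ((1 - t) • x + t • y) (y - x) := by
    rw [← intervalIntegral.integral_of_le zero_le_one,
      intervalIntegral.integral_eq_sub_of_hasDerivAt (fun t _ ↦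
        (hv.differentiable one_ne_zero _).hasFDerivAt.comp_hasDerivAt t (hline t))
        (Continuous.intervalIntegrable (by fun_prop) _ _)]
    simp
  have : IsProbabilityMeasure (volume.restrict (Ioc (0 : ℝ) 1)) := ⟨by simp⟩
  have hmeas : Measurable fun t : ℝ ↦ ‖fderiv ℝ v ((1 - t) • x + t • y)‖ₑ :=
    Continuous.measurable (by fun_prop)
  calc ‖v y - v x‖ₑ ^ p
      ≤ (∫⁻ t in Ioc (0 : ℝ) 1, ‖fderiv ℝ v ((1 - t) • x + t • y)‖ₑ * edist x y) ^ p := by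
        rw [hftc, edist_comm, edist_eq_enorm_sub]
        gcongr
        exact (enorm_integral_le_lintegral_enorm _).trans
          (lintegral_mono fun t ↦ ContinuousLinearMap.le_opENorm _ _)
    _ = edist x y ^ p * (∫⁻ t in Ioc (0 : ℝ) 1, ‖fderiv ℝ v ((1 - t) • x + t • y)‖ₑ) ^ p := by
        rw [lintegral_mul_const _ hmeas, ENNReal.mul_rpow_of_nonneg _ _ (by positivity), mul_comm]
    _ ≤ _ := by gcongr; exact rpow_lintegral_le_lintegral_rpow hmeas.aemeasurable hp

variable [FiniteDimensional ℝ E] [MeasurableSpace E] [BorelSpace E] (μ : Measure E)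
  [μ.IsAddHaarMeasure]

theorem lintegral_comp_add_smul (f : E → ℝ≥0∞) (a : E) {t : ℝ} (ht : t ≠ 0) :
    ∫⁻ y, f (a + t • y) ∂μ = ENNReal.ofReal |(t ^ finrank ℝ E)⁻¹| * ∫⁻ y, f y ∂μ := by
  rw [← lintegral_add_left_eq_self f a, ← smul_eq_mul, ← lintegral_smul_measure,
    ← Measure.map_addHaar_smul μ ht]
  exact ((Homeomorph.smulOfNeZero t ht : E ≃ₜ E).measurableEmbedding.lintegral_map
    fun y ↦ f (a + y)).symm

theorem lintegral_lintegral_segment_le_of_half_le {s : Set E} (hs : MeasurableSet s)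
    (hconv : Convex ℝ s) (f : E → ℝ≥0∞) {t : ℝ} (ht : 1 / 2 ≤ t) (ht₁ : t ≤ 1) :
    ∫⁻ x in s, ∫⁻ y in s, f ((1 - t) • x + t • y) ∂μ ∂μ ≤
      2 ^ finrank ℝ E * μ s * ∫⁻ y in s, f y ∂μ := by
  have hscale : ENNReal.ofReal |(t ^ finrank ℝ E)⁻¹| ≤ 2 ^ finrank ℝ E := by
    have ht₂ : t⁻¹ ≤ 2 := by rw [inv_le_comm₀ (by linarith) two_pos]; linarith
    rw [abs_of_pos (by positivity), ← inv_pow, ENNReal.ofReal_pow (by positivity)]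
    gcongr
    simpa using ENNReal.ofReal_le_ofReal ht₂
  have hinner : ∀ x ∈ s,
      ∫⁻ y in s, f ((1 - t) • x + t • y) ∂μ ≤ 2 ^ finrank ℝ E * ∫⁻ y in s, f y ∂μ := by
    intro x hx
    have hind : ∀ y, s.indicator (fun y ↦ f ((1 - t) • x + t • y)) y ≤
        s.indicator f ((1 - t) • x + t • y) := fun y ↦ by
      by_cases hy : y ∈ s
      · have : (1 - t) • x + t • y ∈ s := hconv hx hy (by linarith) (by linarith) (by ring)
        simp [hy, this]
      · simp [hy]
    rw [← lintegral_indicator hs, ← lintegral_indicator hs]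
    refine (lintegral_mono hind).trans ?_
    rw [lintegral_comp_add_smul μ _ _ (by linarith)]
    gcongr
  calc ∫⁻ x in s, ∫⁻ y in s, f ((1 - t) • x + t • y) ∂μ ∂μ
      ≤ ∫⁻ _ in s, 2 ^ finrank ℝ E * ∫⁻ y in s, f y ∂μ ∂μ := setLIntegral_mono' hs hinner
    _ = 2 ^ finrank ℝ E * μ s * ∫⁻ y in s, f y ∂μ := by rw [setLIntegral_const]; ring

theorem lintegral_lintegral_segment_le {s : Set E} (hs : MeasurableSet s) (hconv : Convex ℝ s)
    {f : E → ℝ≥0∞} (hf : Measurable f) {t : ℝ} (ht₀ : 0 ≤ t) (ht₁ : t ≤ 1) :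
    ∫⁻ x in s, ∫⁻ y in s, f ((1 - t) • x + t • y) ∂μ ∂μ ≤
      2 ^ finrank ℝ E * μ s * ∫⁻ y in s, f y ∂μ := by
  rcases le_total (1 / 2) t with h | h
  · exact lintegral_lintegral_segment_le_of_half_le μ hs hconv f h ht₁
  · have hswap := lintegral_lintegral_segment_le_of_half_le μ hs hconv f (t := 1 - t)
      (by linarith) (by linarith)
    have hmeas : Measurable fun q : E × E ↦ f ((1 - t) • q.1 + t • q.2) :=
      hf.comp (by fun_prop)
    rw [lintegral_lintegral_swap hmeas.aemeasurable]
    convert hswap using 5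
    rw [add_comm, sub_sub_cancel]

theorem lintegral_lintegral_lintegral_segment_le {s : Set E} (hs : MeasurableSet s)
    (hconv : Convex ℝ s) {f : E → ℝ≥0∞} (hf : Measurable f) :
    ∫⁻ x in s, ∫⁻ y in s, (∫⁻ t in Ioc (0 : ℝ) 1, f ((1 - t) • x + t • y)) ∂μ ∂μ ≤
      2 ^ finrank ℝ E * μ s * ∫⁻ y in s, f y ∂μ := by
  have hswap : ∀ x, ∫⁻ y in s, (∫⁻ t in Ioc (0 : ℝ) 1, f ((1 - t) • x + t • y)) ∂μ =
      ∫⁻ t in Ioc (0 : ℝ) 1, ∫⁻ y in s, f ((1 - t) • x + t • y) ∂μ := fun x ↦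
    lintegral_lintegral_swap (Measurable.aemeasurable (hf.comp (by fun_prop)))
  have hmeas : Measurable fun q : E × ℝ ↦ ∫⁻ y in s, f ((1 - q.2) • q.1 + q.2 • y) ∂μ :=
    Measurable.lintegral_prod_right' (f := fun w : (E × ℝ) × E ↦
      f ((1 - w.1.2) • w.1.1 + w.1.2 • w.2)) (hf.comp (by fun_prop))
  simp_rw [hswap]
  rw [lintegral_lintegral_swap hmeas.aemeasurable]
  refine (setLIntegral_mono' measurableSet_Ioc fun t ht ↦
    lintegral_lintegral_segment_le μ hs hconv hf ht.1.le ht.2).trans ?_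
  simp

/-- The `p`-Poincaré inequality on a convex set, as a bound on the double integral. -/
theorem lintegral_lintegral_enorm_sub_rpow_le [CompleteSpace F] {s : Set E} (hs : MeasurableSet s)
    (hconv : Convex ℝ s) {v : E → F} (hv : ContDiff ℝ 1 v) {p : ℝ} (hp : 1 ≤ p) :
    ∫⁻ x in s, ∫⁻ y in s, ‖v x - v y‖ₑ ^ p ∂μ ∂μ ≤
      ediam s ^ p * 2 ^ finrank ℝ E * μ s * ∫⁻ x in s, ‖fderiv ℝ v x‖ₑ ^ p ∂μ := by
  set f : E → ℝ≥0∞ := fun x ↦ ‖fderiv ℝ v x‖ₑ ^ p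
  have hf : Measurable f := (hv.continuous_fderiv one_ne_zero).enorm.measurable.pow_const p
  have hmeas : Measurable
      (Function.uncurry fun x y ↦ ∫⁻ t in Ioc (0 : ℝ) 1, f ((1 - t) • x + t • y)) :=
    Measurable.lintegral_prod_right' (f := fun w : (E × E) × ℝ ↦
      f ((1 - w.2) • w.1.1 + w.2 • w.1.2)) (hf.comp (by fun_prop))
  have hpair : ∀ x ∈ s, ∀ y ∈ s, ‖v x - v y‖ₑ ^ p ≤
      ediam s ^ p * ∫⁻ t in Ioc (0 : ℝ) 1, f ((1 - t) • x + t • y) := fun x hx y hy ↦ by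
    rw [← edist_eq_enorm_sub, edist_comm, edist_eq_enorm_sub]
    refine (enorm_sub_rpow_le_lintegral_segment hv hp x y).trans ?_
    gcongr
    exact edist_le_ediam_of_mem hx hy
  calc ∫⁻ x in s, ∫⁻ y in s, ‖v x - v y‖ₑ ^ p ∂μ ∂μ
      ≤ ∫⁻ x in s, ∫⁻ y in s,
          (ediam s ^ p * ∫⁻ t in Ioc (0 : ℝ) 1, f ((1 - t) • x + t • y)) ∂μ ∂μ :=
        setLIntegral_mono' hs fun x hx ↦ setLIntegral_mono' hs fun y hy ↦ hpair x hx y hy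
    _ = ediam s ^ p *
          ∫⁻ x in s, ∫⁻ y in s, (∫⁻ t in Ioc (0 : ℝ) 1, f ((1 - t) • x + t • y)) ∂μ ∂μ :=
        (lintegral_congr fun x ↦ lintegral_const_mul _ hmeas.of_uncurry_left).trans
          (lintegral_const_mul _ hmeas.lintegral_prod_right')
    _ ≤ ediam s ^ p * (2 ^ finrank ℝ E * μ s * ∫⁻ y in s, f y ∂μ) :=
        mul_le_mul_right (lintegral_lintegral_lintegral_segment_le μ hs hconv hf) _
    _ = _ := by ring

theorem enorm_setAverage_sub_setAverage_rpow_le [CompleteSpace F] {s A B : Set E}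
    (hs : MeasurableSet s) (hconv : Convex ℝ s) (hAs : A ⊆ s) (hBs : B ⊆ s)
    (hA : μ A ≠ 0) (hB : μ B ≠ 0) (hA' : μ A ≠ ⊤) (hB' : μ B ≠ ⊤) {v : E → F}
    (hv : ContDiff ℝ 1 v) (hvA : IntegrableOn v A μ) (hvB : IntegrableOn v B μ) {p : ℝ}
    (hp : 1 ≤ p) :
    ‖(⨍ x in A, v x ∂μ) - ⨍ y in B, v y ∂μ‖ₑ ^ p ≤
      ediam s ^ p * 2 ^ finrank ℝ E * μ s * (∫⁻ x in s, ‖fderiv ℝ v x‖ₑ ^ p ∂μ) / μ B / μ A := by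
  have : IsFiniteMeasure (μ.restrict A) := isFiniteMeasure_restrict.2 hA'
  have : IsFiniteMeasure (μ.restrict B) := isFiniteMeasure_restrict.2 hB'
  have : NeZero (μ.restrict A) := ⟨by rwa [Ne, Measure.restrict_eq_zero]⟩
  have : NeZero (μ.restrict B) := ⟨by rwa [Ne, Measure.restrict_eq_zero]⟩
  have hpoint : ∀ x, ‖v x - ⨍ y in B, v y ∂μ‖ₑ ^ p ≤ (∫⁻ y in s, ‖v x - v y‖ₑ ^ p ∂μ) / μ B := by
    intro x
    rw [← edist_eq_enorm_sub, edist_comm, edist_eq_enorm_sub]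
    refine (enorm_average_sub_rpow_le hvB (v x) hp).trans ?_
    rw [laverage_eq, Measure.restrict_apply_univ]
    simp_rw [← edist_eq_enorm_sub, edist_comm (v x)]
    gcongr
  refine (enorm_average_sub_rpow_le hvA _ hp).trans ?_
  rw [laverage_eq, Measure.restrict_apply_univ]
  gcongr
  calc ∫⁻ x in A, ‖v x - ⨍ y in B, v y ∂μ‖ₑ ^ p ∂μ
      ≤ ∫⁻ x in s, (∫⁻ y in s, ‖v x - v y‖ₑ ^ p ∂μ) / μ B ∂μ :=
        (lintegral_mono hpoint).trans (lintegral_mono_set hAs)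
    _ = (∫⁻ x in s, ∫⁻ y in s, ‖v x - v y‖ₑ ^ p ∂μ ∂μ) / μ B := by
        simp_rw [ENNReal.div_eq_inv_mul]
        exact lintegral_const_mul' _ _ (ENNReal.inv_ne_top.2 hB)
    _ ≤ _ := by gcongr; exact lintegral_lintegral_enorm_sub_rpow_le μ hs hconv hv hp

theorem setLIntegral_enorm_rpow_le_of_half_le [CompleteSpace F] {s G : Set E}
    (hs : MeasurableSet s) (hconv : Convex ℝ s) (hG : MeasurableSet G) (hGs : G ⊆ s)
    (hG₀ : μ G ≠ 0) (hG' : μ G ≠ ⊤) (hhalf : μ s ≤ 2 * μ G) {v : E → F} (hv : ContDiff ℝ 1 v)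
    {l : ℝ≥0∞} (hl : ∀ x ∈ G, ‖v x‖ₑ ≤ l) {p : ℝ} (hp : 1 ≤ p) :
    ∫⁻ x in s, ‖v x‖ₑ ^ p ∂μ ≤ 2 ^ (p - 1) * l ^ p * μ s +
      2 ^ p * ediam s ^ p * 2 ^ finrank ℝ E * ∫⁻ x in s, ‖fderiv ℝ v x‖ₑ ^ p ∂μ := by
  have hvm : Measurable fun x ↦ ‖v x‖ₑ ^ p := hv.continuous.enorm.measurable.pow_const p
  have hpoint : ∀ x, ∀ y ∈ G, ‖v x‖ₑ ^ p ≤ 2 ^ (p - 1) * (l ^ p + ‖v x - v y‖ₑ ^ p) := by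
    intro x y hy
    calc ‖v x‖ₑ ^ p = ‖v y + (v x - v y)‖ₑ ^ p := by rw [add_sub_cancel]
      _ ≤ (l + ‖v x - v y‖ₑ) ^ p := by
          gcongr
          exact (enorm_add_le _ _).trans (by gcongr; exact hl y hy)
      _ ≤ _ := ENNReal.rpow_add_le_mul_rpow_add_rpow _ _ hp
  have havg : ∀ x, ‖v x‖ₑ ^ p * μ G ≤
      2 ^ (p - 1) * (l ^ p * μ G + ∫⁻ y in s, ‖v x - v y‖ₑ ^ p ∂μ) := by
    intro x
    have hint : ∫⁻ _ in G, ‖v x‖ₑ ^ p ∂μ ≤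
        ∫⁻ y in G, 2 ^ (p - 1) * (l ^ p + ‖v x - v y‖ₑ ^ p) ∂μ :=
      setLIntegral_mono' hG (hpoint x)
    rw [setLIntegral_const, lintegral_const_mul' _ _ (by finiteness),
      lintegral_add_left measurable_const, setLIntegral_const] at hint
    exact hint.trans (by gcongr)
  have hmul : (∫⁻ x in s, ‖v x‖ₑ ^ p ∂μ) * μ G ≤ 2 ^ (p - 1) * (l ^ p * μ G * μ s +
      ediam s ^ p * 2 ^ finrank ℝ E * μ s * ∫⁻ x in s, ‖fderiv ℝ v x‖ₑ ^ p ∂μ) := by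
    rw [← lintegral_mul_const _ hvm]
    refine (lintegral_mono havg).trans ?_
    rw [lintegral_const_mul' _ _ (by finiteness), lintegral_add_left measurable_const,
      setLIntegral_const]
    gcongr
    exact lintegral_lintegral_enorm_sub_rpow_le μ hs hconv hv hp
  have htwo : (2 : ℝ≥0∞) ^ p = 2 ^ (p - 1) * 2 := by
    nth_rw 3 [← ENNReal.rpow_one 2]
    rw [← ENNReal.rpow_add _ _ two_ne_zero (by finiteness), sub_add_cancel]
  rw [← ENNReal.mul_le_mul_iff_left hG₀ hG', htwo]
  calc _ ≤ _ := hmul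
    _ ≤ 2 ^ (p - 1) * (l ^ p * μ G * μ s + ediam s ^ p * 2 ^ finrank ℝ E * (2 * μ G) *
          ∫⁻ x in s, ‖fderiv ℝ v x‖ₑ ^ p ∂μ) := by gcongr
    _ = _ := by ring

end Poincare

section BallAveraging

lemma ediam_ball_le {X : Type*} [PseudoMetricSpace X] (x : X) (r : ℝ) :
    ediam (ball x r) ≤ ENNReal.ofReal (2 * r) := by
  rw [← eball_ofReal, ENNReal.ofReal_mul zero_le_two, ENNReal.ofReal_ofNat]
  exact ediam_eball_le

lemma lintegral_enorm_rpow_eq_ofReal {α F : Type*} [MeasurableSpace α] {μ : Measure α}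
    [NormedAddCommGroup F] {f : α → F} {p : ℝ} (hp : 0 ≤ p)
    (hf : Integrable (fun x ↦ ‖f x‖ ^ p) μ) :
    ∫⁻ x, ‖f x‖ₑ ^ p ∂μ = ENNReal.ofReal (∫ x, ‖f x‖ ^ p ∂μ) := by
  rw [ofReal_integral_eq_lintegral_ofReal hf (Eventually.of_forall fun x ↦ by positivity)]
  simp only [← ENNReal.ofReal_rpow_of_nonneg (norm_nonneg _) hp, ofReal_norm]

variable {E F : Type*} [NormedAddCommGroup E] [NormedSpace ℝ E] [FiniteDimensional ℝ E]
  [MeasurableSpace E] [BorelSpace E] (μ : Measure E) [μ.IsAddHaarMeasure]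
  [NormedAddCommGroup F] [NormedSpace ℝ F]

theorem lintegral_setLIntegral_ball {f : E → ℝ≥0∞} (hf : Measurable f)
    (s : Set E) (δ : ℝ) :
    ∫⁻ y in s, ∫⁻ x in ball y δ, f x ∂μ ∂μ = ∫⁻ x, f x * μ (ball x δ ∩ s) ∂μ := by
  have hdist : MeasurableSet {q : E × E | dist q.2 q.1 < δ} :=
    (isOpen_lt (by fun_prop) continuous_const).measurableSet
  have hmeas : Measurable (Function.uncurry fun y x ↦ (ball y δ).indicator f x) :=
    (hf.comp measurable_snd).indicator hdist
  have hsymm : ∀ x y, (ball y δ).indicator f x = (ball x δ).indicator (fun _ ↦ f x) y := by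
    simp [indicator, dist_comm]
  simp_rw [← lintegral_indicator measurableSet_ball f]
  rw [lintegral_lintegral_swap hmeas.aemeasurable]
  simp [hsymm, Measure.restrict_apply, measurableSet_ball]

theorem measure_ball_mul_setLIntegral_ball_le {f : E → ℝ≥0∞} (hf : Measurable f) (x₀ : E)
    (r δ : ℝ) :
    μ (ball 0 δ) * ∫⁻ x in ball x₀ (r - δ), f x ∂μ ≤
      ∫⁻ y in ball x₀ r, ∫⁻ x in ball y δ, f x ∂μ ∂μ := by
  rw [lintegral_setLIntegral_ball μ hf, ← lintegral_const_mul _ hf,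
    ← lintegral_indicator measurableSet_ball]
  refine lintegral_mono (indicator_le fun x hx ↦ ?_)
  have hsub : ball x δ ⊆ ball x₀ r := ball_subset_ball' (by linarith [mem_ball.1 hx])
  rw [inter_eq_left.2 hsub, Measure.addHaar_ball_center μ x, mul_comm]

theorem lintegral_setLIntegral_ball_le {f : E → ℝ≥0∞} (hf : Measurable f) (x₀ : E) (r δ : ℝ) :
    ∫⁻ y in ball x₀ r, ∫⁻ x in ball y δ, f x ∂μ ∂μ ≤
      μ (ball 0 δ) * ∫⁻ x in ball x₀ (r + δ), f x ∂μ := by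
  rw [lintegral_setLIntegral_ball μ hf, ← lintegral_const_mul _ hf,
    ← lintegral_indicator measurableSet_ball]
  refine lintegral_mono fun x ↦ ?_
  by_cases hx : x ∈ ball x₀ (r + δ)
  · rw [indicator_of_mem hx, mul_comm, ← Measure.addHaar_ball_center μ x]
    gcongr
    exact inter_subset_left
  · have hdisj : Disjoint (ball x δ) (ball x₀ r) :=
      ball_disjoint_ball (by linarith [not_lt.1 (mt mem_ball.2 hx)])
    simp [hdisj.inter_eq]

theorem setLIntegral_ball_le_of_forall_ball_le {f g : E → ℝ≥0∞} (hf : Measurable f)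
    (hg : Measurable g) {x₀ : E} {r δ : ℝ} (hδ : 0 < δ) {c : ℝ≥0∞}
    (h : ∀ y ∈ ball x₀ r,
      ∫⁻ x in ball y δ, f x ∂μ ≤ c * μ (ball y δ) + ∫⁻ x in ball y δ, g x ∂μ) :
    ∫⁻ x in ball x₀ (r - δ), f x ∂μ ≤
      c * μ (ball x₀ r) + ∫⁻ x in ball x₀ (r + δ), g x ∂μ := by
  rw [← ENNReal.mul_le_mul_iff_right (measure_ball_pos μ 0 hδ).ne' measure_ball_lt_top.ne]
  calc μ (ball 0 δ) * ∫⁻ x in ball x₀ (r - δ), f x ∂μ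
      ≤ ∫⁻ y in ball x₀ r, ∫⁻ x in ball y δ, f x ∂μ ∂μ :=
        measure_ball_mul_setLIntegral_ball_le μ hf x₀ r δ
    _ ≤ ∫⁻ y in ball x₀ r, (c * μ (ball 0 δ) + ∫⁻ x in ball y δ, g x ∂μ) ∂μ :=
        setLIntegral_mono' measurableSet_ball fun y hy ↦ by
          simpa only [Measure.addHaar_ball_center] using h y hy
    _ ≤ c * μ (ball 0 δ) * μ (ball x₀ r) +
          μ (ball 0 δ) * ∫⁻ x in ball x₀ (r + δ), g x ∂μ := by
        rw [lintegral_add_left measurable_const, setLIntegral_const]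
        gcongr
        exact lintegral_setLIntegral_ball_le μ hg x₀ r δ
    _ = _ := by ring

theorem measure_le_two_mul_measure_sdiff {α : Type*} {m : MeasurableSpace α} {ν : Measure α}
    {s t : Set α} (ht : MeasurableSet t) (hs : ν s ≠ ⊤) (h : 2 * ν (s ∩ t) ≤ ν s) :
    ν s ≤ 2 * ν (s \ t) := by
  have hsum : ν s + ν s ≤ ν s + 2 * ν (s \ t) := by
    rw [← two_mul]
    nth_rw 1 [← measure_inter_add_sdiff s ht]
    rw [mul_add]
    gcongr
  exact (ENNReal.add_le_add_iff_left hs).1 hsum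

/-- Poincaré's inequality on the balls of radius `δ`, averaged over their centres. -/
theorem setLIntegral_ball_enorm_rpow_le [CompleteSpace F] {v : E → F} (hv : ContDiff ℝ 1 v)
    {x₀ : E} {r δ : ℝ} (hδ : 0 < δ) {l : ℝ≥0∞}
    (hl : ∀ y ∈ ball x₀ r, 2 * μ (ball y δ ∩ {x | l < ‖v x‖ₑ}) ≤ μ (ball y δ)) {p : ℝ}
    (hp : 1 ≤ p) :
    ∫⁻ x in ball x₀ (r - δ), ‖v x‖ₑ ^ p ∂μ ≤ 2 ^ (p - 1) * l ^ p * μ (ball x₀ r) +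
      2 ^ p * ENNReal.ofReal (2 * δ) ^ p * 2 ^ finrank ℝ E *
        ∫⁻ x in ball x₀ (r + δ), ‖fderiv ℝ v x‖ₑ ^ p ∂μ := by
  have hDv : Measurable fun x ↦ ‖fderiv ℝ v x‖ₑ ^ p :=
    (hv.continuous_fderiv one_ne_zero).enorm.measurable.pow_const p
  have hlevel : MeasurableSet {x | l < ‖v x‖ₑ} :=
    measurableSet_lt measurable_const hv.continuous.enorm.measurable
  rw [← lintegral_const_mul _ hDv]
  refine setLIntegral_ball_le_of_forall_ball_le μ (hv.continuous.enorm.measurable.pow_const p)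
    (hDv.const_mul _) hδ fun y hy ↦ ?_
  have hhalf := measure_le_two_mul_measure_sdiff hlevel measure_ball_lt_top.ne (hl y hy)
  have hpos : μ (ball y δ \ {x | l < ‖v x‖ₑ}) ≠ 0 := fun h0 ↦ by
    rw [h0, mul_zero] at hhalf
    exact (measure_ball_pos μ y hδ).not_ge hhalf
  rw [lintegral_const_mul _ hDv]
  refine (setLIntegral_enorm_rpow_le_of_half_le μ measurableSet_ball (convex_ball y δ)
    (measurableSet_ball.diff hlevel) sdiff_subset hpos
    (measure_ne_top_of_subset sdiff_subset measure_ball_lt_top.ne) hhalf hv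
    (fun x hx ↦ not_lt.1 hx.2) hp).trans ?_
  gcongr
  exact ediam_ball_le y δ

lemma setIntegral_ball_norm_rpow_le [CompleteSpace F] {v : E → F} (hv : ContDiff ℝ 1 v)
    {x₀ : E} {r δ l : ℝ} (hδ : 0 < δ) (hl₀ : 0 ≤ l)
    (hl : ∀ y ∈ ball x₀ r, 2 * μ (ball y δ ∩ {x | l < ‖v x‖}) ≤ μ (ball y δ)) {p : ℝ}
    (hp : 1 ≤ p) :
    ∫ x in ball x₀ (r - δ), ‖v x‖ ^ p ∂μ ≤ 2 ^ (p - 1) * l ^ p * μ.real (ball x₀ r) +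
      2 ^ p * (2 * δ) ^ p * 2 ^ finrank ℝ E * ∫ x in ball x₀ (r + δ), ‖fderiv ℝ v x‖ ^ p ∂μ := by
  have hp₀ : 0 ≤ p := by linarith
  have hint {f : E → ℝ} (hf : Continuous f) (ρ : ℝ) :
      IntegrableOn (fun x ↦ f x ^ p) (ball x₀ ρ) μ :=
    ((hf.rpow_const fun _ ↦ .inr hp₀).continuousOn.integrableOn_compact
      (isCompact_closedBall x₀ ρ)).mono_set ball_subset_closedBall
  have hle := setLIntegral_ball_enorm_rpow_le μ hv (l := ENNReal.ofReal l) hδ (by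
    simpa only [← ofReal_norm, ENNReal.ofReal_lt_ofReal_iff_of_nonneg hl₀] using hl) hp
  rw [lintegral_enorm_rpow_eq_ofReal hp₀ (hint hv.continuous.norm _),
    lintegral_enorm_rpow_eq_ofReal hp₀ (hint (hv.continuous_fderiv one_ne_zero).norm _)] at hle
  have hv₀ : 0 ≤ ∫ x in ball x₀ (r - δ), ‖v x‖ ^ p ∂μ := integral_nonneg fun x ↦ by positivity
  have hDv₀ : 0 ≤ ∫ x in ball x₀ (r + δ), ‖fderiv ℝ v x‖ ^ p ∂μ :=
    integral_nonneg fun x ↦ by positivity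
  replace hle := ENNReal.toReal_mono (by finiteness) hle
  rw [ENNReal.toReal_add (by finiteness) (by finiteness)] at hle
  simpa [← ENNReal.toReal_rpow, measureReal_def, hl₀, hv₀, hDv₀, hδ.le] using hle

end BallAveraging

section Cutoff

variable {E : Type*} [NormedAddCommGroup E]

/-- A smooth cutoff equal to `1` on `s` and to `0` off `t`. The bound on the derivative, with the
exponent `p - 1` on the right, says that `ζ ^ (1 / p)` has `p`-energy density at most
`k / p ^ p`. -/
structure IsCutoff [NormedSpace ℝ E] (p k : ℝ) (s t : Set E) (ζ : E → ℝ) : Prop where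
  contDiff : ContDiff ℝ (⊤ : ℕ∞) ζ
  nonneg : ∀ x, 0 ≤ ζ x
  le_one : ∀ x, ζ x ≤ 1
  eq_one : ∀ x ∈ s, ζ x = 1
  eq_zero : ∀ x ∉ t, ζ x = 0
  const_nonneg : 0 ≤ k
  norm_fderiv_rpow_le : ∀ x, ‖fderiv ℝ ζ x‖ ^ p ≤ k * ζ x ^ (p - 1)

namespace IsCutoff

variable [NormedSpace ℝ E] {p k : ℝ} {s t : Set E} {ζ : E → ℝ}

lemma subset (hζ : IsCutoff p k s t ζ) : s ⊆ t := fun x hx ↦ by_contra fun h ↦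
  one_ne_zero ((hζ.eq_one x hx).symm.trans (hζ.eq_zero x h))

lemma fderiv_eq_zero (hζ : IsCutoff p k s t ζ) {x : E} (hx : ζ x = 0) : fderiv ℝ ζ x = 0 :=
  IsLocalMin.fderiv_eq_zero <| Eventually.of_forall fun y ↦ hx ▸ hζ.nonneg y

lemma norm_fderiv_rpow_le_indicator (hζ : IsCutoff p k s t ζ) (hp : 1 < p) (x : E) :
    ‖fderiv ℝ ζ x‖ ^ p ≤ t.indicator (fun _ ↦ k) x * ζ x ^ (p - 1) := by
  by_cases hx : x ∈ t
  · simpa only [indicator_of_mem hx] using hζ.norm_fderiv_rpow_le x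
  · simp [indicator_of_notMem hx, hζ.fderiv_eq_zero (hζ.eq_zero x hx),
      Real.zero_rpow (by linarith : p ≠ 0)]

lemma indicator_le_mul (hζ : IsCutoff p k s t ζ) {f : E → ℝ} {x : E} (hf : 0 ≤ f x) :
    s.indicator f x ≤ ζ x * f x := by
  by_cases hx : x ∈ s
  · simp [hx, hζ.eq_one x hx]
  · simpa [hx] using mul_nonneg (hζ.nonneg x) hf

end IsCutoff

lemma norm_fderiv_pow_rpow_le [NormedSpace ℝ E] {η : E → ℝ} {x : E} {p L : ℝ} {n : ℕ}
    (hη : DifferentiableAt ℝ η x) (h₀ : 0 ≤ η x) (h₁ : η x ≤ 1) (hL : ‖fderiv ℝ η x‖ ≤ L)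
    (hp : 1 ≤ p) (hpn : p ≤ n) :
    ‖fderiv ℝ (fun y ↦ η y ^ n) x‖ ^ p ≤ (n * L) ^ p * (η x ^ n) ^ (p - 1) := by
  have hn : 1 ≤ n := Nat.one_le_cast (α := ℝ) |>.1 (hp.trans hpn)
  have hL₀ : 0 ≤ L := (norm_nonneg _).trans hL
  have hpow : (η x ^ (n - 1)) ^ p ≤ (η x ^ n) ^ (p - 1) := by
    rw [← Real.rpow_natCast_mul h₀, ← Real.rpow_natCast_mul h₀, Nat.cast_sub hn, Nat.cast_one]
    exact Real.rpow_le_rpow_of_exponent_ge' h₀ h₁ (by nlinarith) (by nlinarith)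
  calc ‖fderiv ℝ (fun y ↦ η y ^ n) x‖ ^ p
      = (n * η x ^ (n - 1) * ‖fderiv ℝ η x‖) ^ p := by
        rw [(hη.hasFDerivAt.pow n).fderiv, norm_smul, Real.norm_of_nonneg (by positivity)]
        simp
    _ ≤ (n * η x ^ (n - 1) * L) ^ p := by gcongr
    _ = (n * L) ^ p * (η x ^ (n - 1)) ^ p := by
        rw [← Real.mul_rpow (by positivity) (by positivity)]; ring_nf
    _ ≤ _ := by gcongr

lemma exists_abs_deriv_smoothTransition_le : ∃ S, ∀ x, |deriv Real.smoothTransition x| ≤ S := by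
  refine ((Real.smoothTransition.contDiff (n := 1)).continuous_deriv le_rfl
    ).bounded_above_of_compact_support <|
      HasCompactSupport.intro (isCompact_Icc (a := 0) (b := 1)) fun x hx ↦ ?_
  obtain hx | hx : x < 0 ∨ 1 < x := by simpa [or_iff_not_imp_left] using hx
  · have : Real.smoothTransition =ᶠ[𝓝 x] fun _ ↦ 0 := by
      filter_upwards [Iio_mem_nhds hx] with y hy using Real.smoothTransition.zero_of_nonpos hy.le
    simp [this.deriv_eq]
  · have : Real.smoothTransition =ᶠ[𝓝 x] fun _ ↦ 1 := by
      filter_upwards [Ioi_mem_nhds hx] with y hy using Real.smoothTransition.one_of_one_le hy.le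
    simp [this.deriv_eq]

variable [InnerProductSpace ℝ E]

lemma norm_fderiv_sq_sub_norm_sub_sq_div_le {x₀ x : E} {r r' : ℝ} (hr : 0 ≤ r) (hrr : r < r')
    (hx : x ∈ ball x₀ r') :
    ‖fderiv ℝ (fun y ↦ (r' ^ 2 - ‖y - x₀‖ ^ 2) / (r' ^ 2 - r ^ 2)) x‖ ≤ 2 / (r' - r) := by
  rw [mem_ball_iff_norm] at hx
  have hden : 0 < r' ^ 2 - r ^ 2 := by nlinarith
  have hfderiv : HasFDerivAt (fun y : E ↦ (r' ^ 2 - ‖y - x₀‖ ^ 2) / (r' ^ 2 - r ^ 2))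
      ((r' ^ 2 - r ^ 2)⁻¹ • -(2 • innerSL ℝ (x - x₀)) : E →L[ℝ] ℝ) x := by
    simpa [div_eq_mul_inv] using
      ((((hasFDerivAt_id x).sub_const x₀).norm_sq).const_sub (r' ^ 2)).mul_const
        (r' ^ 2 - r ^ 2)⁻¹
  rw [hfderiv.fderiv, norm_smul, norm_neg, ← Nat.cast_smul_eq_nsmul ℝ, norm_smul,
    innerSL_apply_norm, norm_inv, Real.norm_of_nonneg hden.le, Nat.cast_ofNat, Real.norm_ofNat,
    inv_mul_eq_div, div_le_div_iff₀ hden (sub_pos.2 hrr)]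
  nlinarith

lemma exists_contDiff_ball_norm_fderiv_le : ∃ S : ℝ, 0 < S ∧
    ∀ (x₀ : E) (r r' : ℝ), 0 < r → r < r' → ∃ η : E → ℝ,
      ContDiff ℝ (⊤ : ℕ∞) η ∧ (∀ x, 0 ≤ η x) ∧ (∀ x, η x ≤ 1) ∧
      (∀ x ∈ ball x₀ r, η x = 1) ∧ (∀ x ∉ ball x₀ r', η x = 0) ∧
      ∀ x, ‖fderiv ℝ η x‖ ≤ S / (r' - r) := by
  obtain ⟨S, hS⟩ := exists_abs_deriv_smoothTransition_le
  have hS₀ : 0 ≤ S := (abs_nonneg _).trans (hS 0)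
  refine ⟨2 * S + 1, by positivity, fun x₀ r r' hr hrr ↦ ?_⟩
  have hden : 0 < r' ^ 2 - r ^ 2 := by nlinarith
  have : 0 < r' - r := sub_pos.2 hrr
  set f : E → ℝ := fun x ↦ (r' ^ 2 - ‖x - x₀‖ ^ 2) / (r' ^ 2 - r ^ 2)
  have hf : ContDiff ℝ (⊤ : ℕ∞) f :=
    (contDiff_const.sub ((contDiff_id.sub contDiff_const).norm_sq ℝ)).div_const _
  have hT : ContDiff ℝ (⊤ : ℕ∞) Real.smoothTransition := Real.smoothTransition.contDiff
  have hzero : ∀ x ∉ ball x₀ r', (Real.smoothTransition ∘ f) x = 0 := fun x hx ↦ by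
    rw [mem_ball_iff_norm, not_lt] at hx
    refine Real.smoothTransition.zero_of_nonpos (div_nonpos_of_nonpos_of_nonneg ?_ hden.le)
    nlinarith
  refine ⟨Real.smoothTransition ∘ f, hT.comp hf, fun x ↦ Real.smoothTransition.nonneg _,
    fun x ↦ Real.smoothTransition.le_one _, fun x hx ↦ ?_, hzero, fun x ↦ ?_⟩
  · rw [mem_ball_iff_norm] at hx
    refine Real.smoothTransition.one_of_one_le ((one_le_div hden).2 ?_)
    nlinarith [norm_nonneg (x - x₀)]
  by_cases hx : x ∈ ball x₀ r'
  · have hcomp := (hT.differentiable (by simp) (f x)).hasDerivAt.comp_hasFDerivAt x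
      (hf.differentiable (by simp) x).hasFDerivAt
    rw [hcomp.fderiv, norm_smul]
    calc _ ≤ S * (2 / (r' - r)) :=
          mul_le_mul (hS _) (norm_fderiv_sq_sub_norm_sub_sq_div_le hr.le hrr hx) (norm_nonneg _) hS₀
      _ ≤ (2 * S + 1) / (r' - r) := by rw [mul_div_assoc']; gcongr; linarith
  · have hmin : IsLocalMin (Real.smoothTransition ∘ f) x :=
      Eventually.of_forall fun y ↦ (hzero x hx).trans_le (Real.smoothTransition.nonneg _)
    rw [hmin.fderiv_eq_zero, norm_zero]
    positivity

lemma exists_isCutoff_ball (E : Type*) [NormedAddCommGroup E] [InnerProductSpace ℝ E] {p : ℝ}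
    (hp : 1 ≤ p) : ∃ K : ℝ, 0 < K ∧ ∀ (x₀ : E) (r r' : ℝ), 0 < r → r < r' →
      ∃ ζ, IsCutoff p (K / (r' - r) ^ p) (ball x₀ r) (ball x₀ r') ζ := by
  obtain ⟨S, hS₀, hS⟩ := exists_contDiff_ball_norm_fderiv_le (E := E)
  have hn : 0 < ⌈p⌉₊ := Nat.ceil_pos.2 (by linarith)
  refine ⟨(⌈p⌉₊ * S) ^ p, by positivity, fun x₀ r r' hr hrr ↦ ?_⟩
  have hsub : 0 < r' - r := sub_pos.2 hrr
  obtain ⟨η, hη, hη₀, hη₁, hη_one, hη_zero, hη_fderiv⟩ := hS x₀ r r' hr hrr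
  refine ⟨fun x ↦ η x ^ ⌈p⌉₊,
    { contDiff := hη.pow _
      nonneg := fun x ↦ pow_nonneg (hη₀ x) _
      le_one := fun x ↦ pow_le_one₀ (hη₀ x) (hη₁ x)
      eq_one := fun x hx ↦ by simp [hη_one x hx]
      eq_zero := fun x hx ↦ by simp [hη_zero x hx, hn.ne']
      const_nonneg := by positivity
      norm_fderiv_rpow_le := fun x ↦ ?_ }⟩
  rw [← Real.div_rpow (by positivity) hsub.le, mul_div_assoc]
  exact norm_fderiv_pow_rpow_le (hη.differentiable (by simp) x) (hη₀ x) (hη₁ x) (hη_fderiv x) hp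
    (Nat.le_ceil p)

end Cutoff

section Energy

variable {d : ℕ} {Ω : Set (Euc d)} {V u w : Euc d → ℝ} {p : ℝ}

/-- Nonnegativity of the energy functional, the criticality-theoretic assumption `Q ≥ 0`. -/
def EnergyNonneg (Ω : Set (Euc d)) (V : Euc d → ℝ) (p : ℝ) : Prop :=
  ∀ u, IsTestFun Ω u → 0 ≤ energyQ Ω V p u

lemma LocBddPotential.integrable_mul (hV : LocBddPotential Ω V) (hu : Continuous u)
    (hu' : HasCompactSupport u) (hΩ : tsupport u ⊆ Ω) : Integrable fun x ↦ V x * u x := by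
  obtain ⟨C, hC⟩ := hV.2 (tsupport u) hΩ hu'
  refine ((hu.integrable_of_hasCompactSupport hu').norm.const_mul C).mono'
    (hV.1.mul hu.measurable).aestronglyMeasurable (Eventually.of_forall fun x ↦ ?_)
  by_cases hx : x ∈ tsupport u
  · rw [norm_mul]
    gcongr
    exact hC x hx
  · simp [image_eq_zero_of_notMem_tsupport hx]

lemma setIntegral_abs_const_smul_rpow (u : Euc d → ℝ) (p : ℝ) (s : Set (Euc d)) (c : ℝ) :
    ∫ x in s, |(c • u) x| ^ p = |c| ^ p * ∫ x in s, |u x| ^ p := by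
  simp only [Pi.smul_apply, smul_eq_mul, abs_mul, Real.mul_rpow (abs_nonneg _) (abs_nonneg _),
    integral_const_mul]

namespace IsTestFun

lemma continuous_abs_rpow (hu : IsTestFun Ω u) (hp : 0 < p) : Continuous fun x ↦ |u x| ^ p :=
  hu.1.continuous.abs.rpow_const fun _ ↦ .inr hp.le

lemma hasCompactSupport_abs_rpow (hu : IsTestFun Ω u) (hp : 0 < p) :
    HasCompactSupport fun x ↦ |u x| ^ p :=
  hu.2.1.comp_left (g := fun t ↦ |t| ^ p) (by simp [Real.zero_rpow hp.ne'])

lemma tsupport_abs_rpow_subset (hu : IsTestFun Ω u) (hp : 0 < p) :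
    (tsupport fun x ↦ |u x| ^ p) ⊆ Ω :=
  (tsupport_comp_subset (g := fun t ↦ |t| ^ p) (by simp [Real.zero_rpow hp.ne']) u).trans hu.2.2

lemma integrable_abs_rpow (hu : IsTestFun Ω u) (hp : 0 < p) : Integrable fun x ↦ |u x| ^ p :=
  (hu.continuous_abs_rpow hp).integrable_of_hasCompactSupport (hu.hasCompactSupport_abs_rpow hp)

lemma integrable_potential_mul (hu : IsTestFun Ω u) (hp : 0 < p) (hV : LocBddPotential Ω V) :
    Integrable fun x ↦ V x * |u x| ^ p :=
  hV.integrable_mul (hu.continuous_abs_rpow hp) (hu.hasCompactSupport_abs_rpow hp)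
    (hu.tsupport_abs_rpow_subset hp)

lemma integrable_norm_fderiv_rpow (hu : IsTestFun Ω u) (hp : 0 < p) :
    Integrable fun x ↦ ‖fderiv ℝ u x‖ ^ p :=
  ((hu.1.continuous_fderiv (by simp)).norm.rpow_const
    fun _ ↦ .inr hp.le).integrable_of_hasCompactSupport <|
      (hu.2.1.fderiv ℝ).comp_left (g := fun t ↦ ‖t‖ ^ p) (by simp [Real.zero_rpow hp.ne'])

lemma setIntegral_mul_abs_rpow_eq (hu : IsTestFun Ω u) (hp : 0 < p) (f : Euc d → ℝ) :
    ∫ x in Ω, f x * |u x| ^ p = ∫ x, f x * |u x| ^ p :=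
  setIntegral_eq_integral_of_forall_compl_eq_zero fun x hx ↦ by
    simp [image_eq_zero_of_notMem_tsupport fun h ↦ hx (hu.2.2 h), Real.zero_rpow hp.ne']

lemma energyQ_eq (hu : IsTestFun Ω u) (hp : 0 < p) (hV : LocBddPotential Ω V) :
    energyQ Ω V p u = (∫ x, ‖fderiv ℝ u x‖ ^ p) + ∫ x, V x * |u x| ^ p := by
  rw [← integral_add (hu.integrable_norm_fderiv_rpow hp) (hu.integrable_potential_mul hp hV)]
  simp only [energyQ, gradient, LinearIsometryEquiv.norm_map]
  refine setIntegral_eq_integral_of_forall_compl_eq_zero fun x hx ↦ ?_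
  have hx' : x ∉ tsupport u := fun h ↦ hx (hu.2.2 h)
  have hfderiv : fderiv ℝ u x = 0 := by_contra fun h ↦ hx' (support_fderiv_subset ℝ h)
  simp [image_eq_zero_of_notMem_tsupport hx', hfderiv, Real.zero_rpow hp.ne']

lemma const_smul (hu : IsTestFun Ω u) (c : ℝ) : IsTestFun Ω (c • u) :=
  ⟨hu.1.const_smul c, hu.2.1.smul_left, (tsupport_smul_subset_right (fun _ ↦ c) u).trans hu.2.2⟩

lemma energyQ_const_smul (hu : IsTestFun Ω u) (hp : 0 < p) (hV : LocBddPotential Ω V) (c : ℝ) :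
    energyQ Ω V p (c • u) = |c| ^ p * energyQ Ω V p u := by
  have hfderiv (x) : ‖fderiv ℝ (c • u) x‖ ^ p = |c| ^ p * ‖fderiv ℝ u x‖ ^ p := by
    rw [fderiv_const_smul_field, Pi.smul_apply, norm_smul,
      Real.mul_rpow (norm_nonneg _) (norm_nonneg _), Real.norm_eq_abs]
  have habs (x) : V x * |(c • u) x| ^ p = |c| ^ p * (V x * |u x| ^ p) := by
    rw [Pi.smul_apply, smul_eq_mul, abs_mul, Real.mul_rpow (abs_nonneg _) (abs_nonneg _)]
    ring
  simp only [(hu.const_smul c).energyQ_eq hp hV, hu.energyQ_eq hp hV, hfderiv, habs,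
    integral_const_mul, mul_add]

lemma one_sub_mul {k : ℝ} {s t : Set (Euc d)} {ζ : Euc d → ℝ} (hu : IsTestFun Ω u)
    (hζ : IsCutoff p k s t ζ) : IsTestFun Ω fun x ↦ (1 - ζ x) * u x :=
  ⟨(contDiff_const.sub hζ.contDiff).mul hu.1, hu.2.1.mul_left,
    (tsupport_mul_subset_right (f := fun x ↦ 1 - ζ x)).trans hu.2.2⟩

end IsTestFun

end Energy

section Caccioppoli

lemma integral_add_integral_le {α : Type*} [MeasurableSpace α] {μ : Measure α} {f g f' g' : α → ℝ}
    (hf : Integrable f μ) (hg : Integrable g μ) (hf' : Integrable f' μ) (hg' : Integrable g' μ)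
    (h : ∀ x, f x + g x ≤ f' x + g' x) :
    (∫ x, f x ∂μ) + ∫ x, g x ∂μ ≤ (∫ x, f' x ∂μ) + ∫ x, g' x ∂μ := by
  rw [← integral_add hf hg, ← integral_add hf' hg']
  exact integral_mono (hf.add hg) (hf'.add hg') h

lemma add_rpow_le_of_rpow_le_mul_rpow {p x y a b s t : ℝ} (hp : 1 < p) (hx : 0 ≤ x) (hy : 0 ≤ y)
    (ha : 0 ≤ a) (hb : 0 ≤ b) (hs : 0 ≤ s) (ht : 0 ≤ t) (hxa : x ^ p ≤ a * s ^ (p - 1))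
    (hyb : y ^ p ≤ b * t ^ (p - 1)) : (x + y) ^ p ≤ (a + b) * (s + t) ^ (p - 1) := by
  have hp₀ : 0 < p := by linarith
  obtain ⟨q, hpq⟩ : ∃ q, p.HolderConjugate q := ⟨_, .conjExponent hp⟩
  have hq : 1 / q = (p - 1) / p := by
    rw [one_div, ← hpq.one_sub_inv]
    field_simp
  have hroot {c r : ℝ} (hc : 0 ≤ c) (hr : 0 ≤ r) :
      (c ^ (1 / p) * r ^ (1 / q)) ^ p = c * r ^ (p - 1) := by
    rw [Real.mul_rpow (by positivity) (by positivity), ← Real.rpow_mul hc, ← Real.rpow_mul hr, hq,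
      one_div_mul_cancel hp₀.ne', div_mul_cancel₀ _ hp₀.ne', Real.rpow_one]
  have hle {z c r : ℝ} (hz : 0 ≤ z) (hc : 0 ≤ c) (hr : 0 ≤ r) (h : z ^ p ≤ c * r ^ (p - 1)) :
      z ≤ c ^ (1 / p) * r ^ (1 / q) :=
    (Real.rpow_le_rpow_iff hz (by positivity) hp₀).1 (h.trans_eq (hroot hc hr).symm)
  have hholder : a ^ (1 / p) * s ^ (1 / q) + b ^ (1 / p) * t ^ (1 / q) ≤
      (a + b) ^ (1 / p) * (s + t) ^ (1 / q) := by
    have := Real.inner_le_Lp_mul_Lq_of_nonneg Finset.univ (f := ![a ^ (1 / p), b ^ (1 / p)])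
      (g := ![s ^ (1 / q), t ^ (1 / q)]) hpq
      (by simpa [Fin.forall_fin_two] using ⟨by positivity, by positivity⟩)
      (by simpa [Fin.forall_fin_two] using ⟨by positivity, by positivity⟩)
    simpa [← Real.rpow_mul, ha, hb, hs, ht, hp₀.ne', hpq.symm.pos.ne'] using this
  calc (x + y) ^ p ≤ ((a + b) ^ (1 / p) * (s + t) ^ (1 / q)) ^ p := by
        gcongr
        exact (add_le_add (hle hx ha hs hxa) (hle hy hb ht hyb)).trans hholder
    _ = (a + b) * (s + t) ^ (p - 1) := hroot (by positivity) (by positivity)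

variable {d : ℕ} {Ω s t : Set (Euc d)} {V u ζ : Euc d → ℝ} {p k M : ℝ}

lemma IsCutoff.norm_fderiv_one_sub_mul_rpow_le {E : Type*} [NormedAddCommGroup E]
    [NormedSpace ℝ E] {s t : Set E} {ζ u : E → ℝ} {x : E} (hζ : IsCutoff p k s t ζ) (hp : 1 < p)
    (hu : DifferentiableAt ℝ u x) :
    ‖fderiv ℝ (fun y ↦ (1 - ζ y) * u y) x‖ ^ p ≤
      (1 - ζ x) * ‖fderiv ℝ u x‖ ^ p + k * t.indicator (fun y ↦ |u y| ^ p) x := by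
  have h₁ : 0 ≤ 1 - ζ x := sub_nonneg.2 (hζ.le_one x)
  have hprod : fderiv ℝ (fun y ↦ (1 - ζ y) * u y) x =
      (1 - ζ x) • fderiv ℝ u x + u x • -fderiv ℝ ζ x :=
    (((hζ.contDiff.differentiable (by simp) x).hasFDerivAt.const_sub 1).mul hu.hasFDerivAt).fderiv
  have hnorm : ‖fderiv ℝ (fun y ↦ (1 - ζ y) * u y) x‖ ≤
      (1 - ζ x) * ‖fderiv ℝ u x‖ + |u x| * ‖fderiv ℝ ζ x‖ := by
    rw [hprod]
    refine (norm_add_le _ _).trans_eq ?_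
    rw [norm_smul, norm_smul, norm_neg, Real.norm_of_nonneg h₁, Real.norm_eq_abs]
  calc ‖fderiv ℝ (fun y ↦ (1 - ζ y) * u y) x‖ ^ p
      ≤ ((1 - ζ x) * ‖fderiv ℝ u x‖ + |u x| * ‖fderiv ℝ ζ x‖) ^ p := by gcongr
    _ ≤ ((1 - ζ x) * ‖fderiv ℝ u x‖ ^ p + t.indicator (fun _ ↦ k) x * |u x| ^ p) *
          ((1 - ζ x) + ζ x) ^ (p - 1) := by
        have hk : 0 ≤ t.indicator (fun _ ↦ k) x := indicator_nonneg (fun _ _ ↦ hζ.const_nonneg) x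
        refine add_rpow_le_of_rpow_le_mul_rpow hp (by positivity) (by positivity) (by positivity)
          (by positivity) h₁ (hζ.nonneg x) (le_of_eq ?_) ?_
        · rw [Real.mul_rpow h₁ (norm_nonneg _), mul_right_comm]
          congr 1
          nth_rw 1 [← sub_add_cancel p 1, Real.rpow_add_one' h₁ (by linarith), mul_comm]
        · rw [Real.mul_rpow (abs_nonneg _) (norm_nonneg _), mul_comm, mul_right_comm]
          gcongr
          exact hζ.norm_fderiv_rpow_le_indicator hp x
    _ = _ := by by_cases hx : x ∈ t <;> simp [hx]

lemma IsCutoff.potential_mul_one_sub_mul_rpow_le (hζ : IsCutoff p k s t ζ) (hp : 0 < p)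
    (hM : ∀ x ∈ t, |V x| ≤ M) (x : Euc d) :
    V x * |(1 - ζ x) * u x| ^ p ≤ V x * |u x| ^ p + M * t.indicator (fun y ↦ |u y| ^ p) x := by
  by_cases hx : x ∈ t
  · have hle : |(1 - ζ x) * u x| ≤ |u x| := by
      rw [abs_mul, abs_of_nonneg (sub_nonneg.2 (hζ.le_one x))]
      exact mul_le_of_le_one_left (abs_nonneg _) (sub_le_self 1 (hζ.nonneg x))
    replace hle := Real.rpow_le_rpow (abs_nonneg _) hle hp.le
    have hnonneg : 0 ≤ |(1 - ζ x) * u x| ^ p := by positivity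
    rw [indicator_of_mem hx]
    nlinarith [(abs_le.1 (hM x hx)).1, (abs_le.1 (hM x hx)).2]
  · simp [hζ.eq_zero x hx, indicator_of_notMem hx]

/-- The energy of `(1 - ζ) u` is nonnegative, and by convexity of `t ↦ t ^ p` replacing `u` by
`(1 - ζ) u` saves the gradient energy of `u` on `s`. -/
lemma EnergyNonneg.setIntegral_norm_fderiv_rpow_le (hQ : EnergyNonneg Ω V p)
    (hV : LocBddPotential Ω V) (hζ : IsCutoff p k s t ζ) (hp : 1 < p) (hs : MeasurableSet s)
    (ht : MeasurableSet t) (hM : ∀ x ∈ t, |V x| ≤ M) (hu : IsTestFun Ω u) :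
    ∫ x in s, ‖fderiv ℝ u x‖ ^ p ≤ energyQ Ω V p u + (M + k) * ∫ x in t, |u x| ^ p := by
  have hp₀ : 0 < p := by linarith
  have hw := hu.one_sub_mul hζ
  have hgrad := hu.integrable_norm_fderiv_rpow hp₀
  have habs := hu.integrable_abs_rpow hp₀
  have hgradient : (∫ x, ‖fderiv ℝ (fun y ↦ (1 - ζ y) * u y) x‖ ^ p) +
      ∫ x in s, ‖fderiv ℝ u x‖ ^ p ≤
      (∫ x, ‖fderiv ℝ u x‖ ^ p) + k * ∫ x in t, |u x| ^ p := by
    rw [← integral_indicator hs, ← integral_indicator ht, ← integral_const_mul]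
    refine integral_add_integral_le (hw.integrable_norm_fderiv_rpow hp₀) (hgrad.indicator hs) hgrad
      ((habs.indicator ht).const_mul k) fun x ↦ ?_
    linarith [hζ.norm_fderiv_one_sub_mul_rpow_le hp (hu.1.differentiable (by simp) x),
      hζ.indicator_le_mul (f := fun y ↦ ‖fderiv ℝ u y‖ ^ p) (x := x) (by positivity)]
  have hpotential : ∫ x, V x * |(1 - ζ x) * u x| ^ p ≤
      (∫ x, V x * |u x| ^ p) + M * ∫ x in t, |u x| ^ p := by
    have hpot := hu.integrable_potential_mul hp₀ hV
    have hM_t := (habs.indicator ht).const_mul M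
    rw [← integral_indicator ht, ← integral_const_mul, ← integral_add hpot hM_t]
    exact integral_mono (hw.integrable_potential_mul hp₀ hV) (hpot.add hM_t)
      (hζ.potential_mul_one_sub_mul_rpow_le hp₀ hM)
  have hQw := hQ _ hw
  rw [hw.energyQ_eq hp₀ hV] at hQw
  rw [hu.energyQ_eq hp₀ hV]
  linarith

end Caccioppoli

section LogProfile

/-- The smooth positive approximation `√(u ^ 2 + κ ^ 2)` of `|u|`. -/
def smoothAbs {X : Type*} (κ : ℝ) (u : X → ℝ) (x : X) : ℝ := √(u x ^ 2 + κ ^ 2)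

lemma smoothAbs_pos {X : Type*} {κ : ℝ} (hκ : 0 < κ) (u : X → ℝ) (x : X) : 0 < smoothAbs κ u x :=
  Real.sqrt_pos.2 (by positivity)

lemma abs_le_smoothAbs {X : Type*} (κ : ℝ) (u : X → ℝ) (x : X) : |u x| ≤ smoothAbs κ u x :=
  Real.abs_le_sqrt (le_add_of_nonneg_right (sq_nonneg κ))

/-- The function `(U ^ p + ζ) ^ (1 / p)`, which interpolates between `U` and `ζ ^ (1 / p)` along the
curve on which the `p`-energy is convex. -/
def rpowAdd {X : Type*} (p : ℝ) (U ζ : X → ℝ) (x : X) : ℝ := (U x ^ p + ζ x) ^ (1 / p)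

/-- The logarithm of `(1 + U ^ p) ^ (1 / p)`. -/
def logProfile {X : Type*} (p : ℝ) (U : X → ℝ) (x : X) : ℝ := 1 / p * Real.log (1 + U x ^ p)

lemma logProfile_nonneg {X : Type*} {p : ℝ} {U : X → ℝ} {x : X} (hp : 0 ≤ p) (hU : 0 ≤ U x) :
    0 ≤ logProfile p U x :=
  mul_nonneg (one_div_nonneg.2 hp) (Real.log_nonneg (by linarith [Real.rpow_nonneg hU p]))

lemma logProfile_le_rpow {X : Type*} {p : ℝ} {U : X → ℝ} {x : X} (hp : 1 ≤ p) (hU : 0 ≤ U x) :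
    logProfile p U x ≤ U x ^ p := by
  have hUp := Real.rpow_nonneg hU p
  have hlog := Real.log_le_sub_one_of_pos (by linarith : 0 < 1 + U x ^ p)
  calc logProfile p U x ≤ 1 * Real.log (1 + U x ^ p) :=
        mul_le_mul_of_nonneg_right ((div_le_one (by linarith)).2 hp)
          (Real.log_nonneg (by linarith))
    _ ≤ U x ^ p := by linarith

lemma lt_logProfile_of_exp_lt {X : Type*} {p N : ℝ} {U : X → ℝ} {x : X} (hp : 0 < p)
    (h : Real.exp N < U x) : N < logProfile p U x := by
  have hexp : Real.exp (N * p) < 1 + U x ^ p := by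
    rw [Real.exp_mul]
    linarith [Real.rpow_lt_rpow (Real.exp_pos N).le h hp]
  rw [logProfile, one_div_mul_eq_div, lt_div_iff₀ hp]
  exact (Real.lt_log_iff_exp_lt ((Real.exp_pos _).trans hexp)).2 hexp

lemma smoothAbs_rpow_le {X : Type*} {p κ : ℝ} (hp : 1 ≤ p) (hκ : 0 ≤ κ) (hκ₁ : κ ≤ 1)
    (u : X → ℝ) (x : X) : smoothAbs κ u x ^ p ≤ 2 ^ (p - 1) * (|u x| ^ p + 1) := by
  have hadd : smoothAbs κ u x ≤ |u x| + κ :=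
    Real.sqrt_le_iff.2 ⟨by positivity, by nlinarith [sq_abs (u x), abs_nonneg (u x)]⟩
  calc smoothAbs κ u x ^ p ≤ (|u x| + 1) ^ p :=
        Real.rpow_le_rpow (Real.sqrt_nonneg _) (by linarith) (by linarith)
    _ ≤ 2 ^ (p - 1) * (|u x| ^ p + 1) := by
        simpa using NNReal.coe_le_coe.2 (NNReal.rpow_add_le_mul_rpow_add_rpow ‖u x‖₊ 1 hp)

variable {E : Type*} [NormedAddCommGroup E] [NormedSpace ℝ E]
variable {u U ζ : E → ℝ} {κ p k : ℝ} {s t : Set E} {x : E} {U' ζ' : E →L[ℝ] ℝ}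

lemma contDiff_smoothAbs (hκ : 0 < κ) (hu : ContDiff ℝ (⊤ : ℕ∞) u) :
    ContDiff ℝ (⊤ : ℕ∞) (smoothAbs κ u) :=
  ((hu.pow 2).add contDiff_const).sqrt fun x ↦ by positivity

lemma norm_fderiv_smoothAbs_le (hκ : 0 < κ) (hu : DifferentiableAt ℝ u x) :
    ‖fderiv ℝ (smoothAbs κ u) x‖ ≤ ‖fderiv ℝ u x‖ := by
  have hpos := smoothAbs_pos hκ u x
  have hderiv : fderiv ℝ (smoothAbs κ u) x = (u x / smoothAbs κ u x) • fderiv ℝ u x := by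
    have hsqrt : HasFDerivAt (smoothAbs κ u) _ x :=
      ((hu.hasFDerivAt.pow 2).add_const (κ ^ 2)).sqrt (by positivity)
    rw [hsqrt.fderiv, smul_smul, smoothAbs]
    congr 1
    simp
    field_simp
  rw [hderiv, norm_smul, norm_div, Real.norm_of_nonneg hpos.le]
  exact mul_le_of_le_one_left (norm_nonneg _) ((div_le_one hpos).2 (abs_le_smoothAbs κ u x))

lemma hasFDerivAt_rpowAdd (hU : HasFDerivAt U U' x) (hζ : HasFDerivAt ζ ζ' x) (hp : 0 < p)
    (hUx : 0 < U x) (hζx : 0 ≤ ζ x) : HasFDerivAt (rpowAdd p U ζ)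
      ((U x ^ p + ζ x) ^ (1 / p - 1) • (U x ^ (p - 1) • U' + p⁻¹ • ζ')) x := by
  have hpos : 0 < U x ^ p + ζ x := by positivity
  refine (((hU.rpow_const (p := p) (.inl hUx.ne')).add hζ).rpow_const (p := 1 / p)
    (.inl hpos.ne')).congr_fderiv ?_
  simp only [smul_add, smul_smul, Pi.add_apply]
  congr 2 <;> field_simp

lemma hasFDerivAt_logProfile (hU : HasFDerivAt U U' x) (hp : 0 < p) (hUx : 0 < U x) :
    HasFDerivAt (logProfile p U) ((U x ^ (p - 1) / (U x ^ p + 1)) • U') x := by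
  have hpos : 0 < 1 + U x ^ p := by positivity
  refine ((((hU.rpow_const (p := p) (.inl hUx.ne')).const_add 1).log hpos.ne').const_mul
    (1 / p)).congr_fderiv ?_
  simp only [smul_smul]
  congr 1
  field_simp
  ring

lemma contDiff_rpowAdd (hU : ContDiff ℝ (⊤ : ℕ∞) U) (hζ : ContDiff ℝ (⊤ : ℕ∞) ζ)
    (hU₀ : ∀ x, 0 < U x) (hζ₀ : ∀ x, 0 ≤ ζ x) : ContDiff ℝ (⊤ : ℕ∞) (rpowAdd p U ζ) :=
  ((hU.rpow_const_of_ne fun x ↦ (hU₀ x).ne').add hζ).rpow_const_of_ne fun x ↦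
    (add_pos_of_pos_of_nonneg (Real.rpow_pos_of_pos (hU₀ x) p) (hζ₀ x)).ne'

lemma contDiff_logProfile (hU : ContDiff ℝ (⊤ : ℕ∞) U) (hU₀ : ∀ x, 0 < U x) :
    ContDiff ℝ (⊤ : ℕ∞) (logProfile p U) :=
  contDiff_const.mul <| (contDiff_const.add (hU.rpow_const_of_ne fun x ↦ (hU₀ x).ne')).log
    fun x ↦ by have := hU₀ x; positivity

/-- Hidden convexity of the `p`-energy; the term `k` bounds the energy of `ζ ^ (1 / p)`. -/
lemma norm_fderiv_rpowAdd_rpow_le (hU : DifferentiableAt ℝ U x) (hζ : DifferentiableAt ℝ ζ x)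
    (hp : 1 < p) (hUx : 0 < U x) (hζx : 0 ≤ ζ x) (hk : 0 ≤ k)
    (hζk : ‖fderiv ℝ ζ x‖ ^ p ≤ k * ζ x ^ (p - 1)) :
    ‖fderiv ℝ (rpowAdd p U ζ) x‖ ^ p ≤ ‖fderiv ℝ U x‖ ^ p + k := by
  have hp₀ : 0 < p := by linarith
  have hpos : 0 < U x ^ p + ζ x := by positivity
  have hUp : (U x ^ (p - 1) * ‖fderiv ℝ U x‖) ^ p ≤ ‖fderiv ℝ U x‖ ^ p * (U x ^ p) ^ (p - 1) := by
    rw [Real.mul_rpow (by positivity) (by positivity), ← Real.rpow_mul hUx.le,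
      ← Real.rpow_mul hUx.le, mul_comm, mul_comm p]
  have hζp : (p⁻¹ * ‖fderiv ℝ ζ x‖) ^ p ≤ k * ζ x ^ (p - 1) := by
    refine hζk.trans' (Real.rpow_le_rpow (by positivity) ?_ hp₀.le)
    exact mul_le_of_le_one_left (norm_nonneg _) (inv_le_one_of_one_le₀ hp.le)
  rw [(hasFDerivAt_rpowAdd hU.hasFDerivAt hζ.hasFDerivAt hp₀ hUx hζx).fderiv, norm_smul,
    Real.norm_of_nonneg (by positivity)]
  calc ((U x ^ p + ζ x) ^ (1 / p - 1) * ‖U x ^ (p - 1) • fderiv ℝ U x + p⁻¹ • fderiv ℝ ζ x‖) ^ p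
      ≤ ((U x ^ p + ζ x) ^ (1 / p - 1) *
          (U x ^ (p - 1) * ‖fderiv ℝ U x‖ + p⁻¹ * ‖fderiv ℝ ζ x‖)) ^ p := by
        gcongr
        refine (norm_add_le _ _).trans_eq ?_
        rw [norm_smul, norm_smul, Real.norm_of_nonneg (by positivity),
          Real.norm_of_nonneg (by positivity)]
    _ = (U x ^ p + ζ x) ^ (1 - p) *
          (U x ^ (p - 1) * ‖fderiv ℝ U x‖ + p⁻¹ * ‖fderiv ℝ ζ x‖) ^ p := by
        rw [Real.mul_rpow (by positivity) (by positivity), ← Real.rpow_mul hpos.le]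
        congr 2
        field_simp
    _ ≤ (U x ^ p + ζ x) ^ (1 - p) *
          ((‖fderiv ℝ U x‖ ^ p + k) * (U x ^ p + ζ x) ^ (p - 1)) := by
        gcongr
        exact add_rpow_le_of_rpow_le_mul_rpow hp (by positivity) (by positivity) (by positivity)
          hk (by positivity) hζx hUp hζp
    _ = ‖fderiv ℝ U x‖ ^ p + k := by
        rw [mul_left_comm, ← Real.rpow_add hpos]
        simp

lemma rpow_sub_one_add_min_mul_le_one {α : ℝ} (hp : 1 < p) (h₀ : 0 ≤ α) (h₁ : α ≤ 1) :
    α ^ (p - 1) + min 1 (p - 1) * (α ^ (p - 1) * (1 - α)) ≤ 1 := by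
  have : 0 ≤ min 1 (p - 1) := le_min zero_le_one (by linarith)
  have hle : α ^ (p - 1) ≤ 1 := Real.rpow_le_one h₀ h₁ (by linarith)
  have hbernoulli : min 1 (p - 1) * (1 - α) ≤ 1 - α ^ (p - 1) := by
    rcases le_total 1 (p - 1) with h | h
    · rw [min_eq_left h, one_mul]
      have := Real.rpow_le_rpow_of_exponent_ge' h₀ h₁ zero_le_one h
      rw [Real.rpow_one] at this
      linarith
    · have := rpow_one_add_le_one_add_mul_self (s := α - 1) (by linarith)
        (by linarith : 0 ≤ p - 1) h
      rw [add_sub_cancel] at this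
      rw [min_eq_right h]
      linarith
  calc α ^ (p - 1) + min 1 (p - 1) * (α ^ (p - 1) * (1 - α))
      = α ^ (p - 1) + α ^ (p - 1) * (min 1 (p - 1) * (1 - α)) := by ring
    _ ≤ α ^ (p - 1) + 1 * (min 1 (p - 1) * (1 - α)) := by
        have := sub_nonneg.2 h₁
        gcongr
    _ ≤ 1 := by linarith

/-- At points where `ζ = 1` the two gradients are `α ^ (1 - 1 / p) • fderiv U` and
`(α ^ (p - 1) * (1 - α)) ^ (1 / p) • fderiv U`, where `α = U ^ p / (U ^ p + 1)`. -/
lemma norm_fderiv_rpowAdd_rpow_add_le (hU : DifferentiableAt ℝ U x) (hp : 1 < p) (hUx : 0 < U x)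
    (hζ : HasFDerivAt ζ (0 : E →L[ℝ] ℝ) x) (hζx : ζ x = 1) :
    ‖fderiv ℝ (rpowAdd p U ζ) x‖ ^ p + min 1 (p - 1) * ‖fderiv ℝ (logProfile p U) x‖ ^ p ≤
      ‖fderiv ℝ U x‖ ^ p := by
  have hp₀ : 0 < p := by linarith
  set a := U x ^ p
  set S := a + 1
  have ha : 0 < a := by positivity
  have hS : 0 < S := by positivity
  have hα : (a / S) ^ (p - 1) = (U x ^ (p - 1)) ^ p * S ^ (1 - p) := by
    rw [Real.div_rpow ha.le hS.le, ← Real.rpow_mul hUx.le, mul_comm p, Real.rpow_mul hUx.le,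
      ← neg_sub p, Real.rpow_neg hS.le, div_eq_mul_inv]
  have hW : (S ^ (1 / p - 1) * U x ^ (p - 1)) ^ p = (a / S) ^ (p - 1) := by
    rw [hα, Real.mul_rpow (by positivity) (by positivity), ← Real.rpow_mul hS.le, mul_comm]
    congr 2
    field_simp
  have hL : (U x ^ (p - 1) / S) ^ p = (a / S) ^ (p - 1) * (1 - a / S) := by
    have : 1 - a / S = 1 / S := by rw [eq_div_iff hS.ne']; field_simp; ring
    rw [this, hα, Real.div_rpow (by positivity) hS.le, Real.rpow_sub hS, Real.rpow_one]
    field_simp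
  rw [(hasFDerivAt_rpowAdd hU.hasFDerivAt hζ hp₀ hUx (by simp [hζx])).fderiv,
    (hasFDerivAt_logProfile hU.hasFDerivAt hp₀ hUx).fderiv, hζx, smul_zero, add_zero, smul_smul,
    norm_smul, norm_smul, Real.norm_of_nonneg (by positivity), Real.norm_of_nonneg (by positivity),
    Real.mul_rpow (by positivity) (norm_nonneg _), Real.mul_rpow (by positivity) (norm_nonneg _),
    hW, hL, ← mul_assoc, ← add_mul]
  refine mul_le_of_le_one_left (by positivity) ?_
  exact rpow_sub_one_add_min_mul_le_one hp (by positivity)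
    ((div_le_one hS).2 (le_add_of_nonneg_right zero_le_one))

lemma IsCutoff.norm_fderiv_rpowAdd_rpow_add_indicator_le (hζ : IsCutoff p k s t ζ) (hp : 1 < p)
    (hU : DifferentiableAt ℝ U x) (hUx : 0 < U x) :
    ‖fderiv ℝ (rpowAdd p U ζ) x‖ ^ p +
        min 1 (p - 1) * s.indicator (fun y ↦ ‖fderiv ℝ (logProfile p U) y‖ ^ p) x ≤
      ‖fderiv ℝ U x‖ ^ p + t.indicator (fun _ ↦ k) x := by
  have hζd := hζ.contDiff.differentiable (by simp) x
  have hk : 0 ≤ t.indicator (fun _ ↦ k) x := indicator_nonneg (fun _ _ ↦ hζ.const_nonneg) x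
  by_cases hx : x ∈ s
  · have hmax : IsLocalMax ζ x := Eventually.of_forall fun y ↦ hζ.eq_one x hx ▸ hζ.le_one y
    rw [indicator_of_mem hx]
    exact le_add_of_le_of_nonneg (norm_fderiv_rpowAdd_rpow_add_le hU hp hUx
      (hmax.fderiv_eq_zero ▸ hζd.hasFDerivAt) (hζ.eq_one x hx)) hk
  · rw [indicator_of_notMem hx, mul_zero, add_zero]
    exact norm_fderiv_rpowAdd_rpow_le hU hζd hp hUx (hζ.nonneg x) hk
      (hζ.norm_fderiv_rpow_le_indicator hp x)

end LogProfile

section LogEnergy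

variable {d : ℕ} {Ω s t : Set (Euc d)} {V u ζ : Euc d → ℝ} {p k κ M : ℝ}

lemma LocBddPotential.integrableOn (hV : LocBddPotential Ω V) {K : Set (Euc d)} (hK : IsCompact K)
    (hKΩ : K ⊆ Ω) : IntegrableOn V K := by
  obtain ⟨C, hC⟩ := hV.2 K hKΩ hK
  exact .of_bound hK.measure_lt_top hV.1.aestronglyMeasurable.restrict C
    (ae_restrict_of_forall_mem hK.measurableSet hC)

lemma IsCutoff.isTestFun (hζ : IsCutoff p k s t ζ) (ht : IsCompact (closure t))
    (htΩ : closure t ⊆ Ω) : IsTestFun Ω ζ := by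
  have hsupp : Function.support ζ ⊆ t := fun x hx ↦ by_contra fun h ↦ hx (hζ.eq_zero x h)
  exact ⟨hζ.contDiff, .of_support_subset_isCompact ht (hsupp.trans subset_closure),
    (closure_mono hsupp).trans htΩ⟩

lemma rpowAdd_smoothAbs_sub_eq_zero (hp : p ≠ 0) (hκ : 0 ≤ κ) {x : Euc d}
    (hx : x ∉ tsupport u ∪ tsupport ζ) : rpowAdd p (smoothAbs κ u) ζ x - κ = 0 := by
  rw [mem_union, not_or] at hx
  simp [rpowAdd, smoothAbs, image_eq_zero_of_notMem_tsupport hx.1,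
    image_eq_zero_of_notMem_tsupport hx.2, Real.sqrt_sq hκ, ← Real.rpow_mul hκ, hp]

lemma IsTestFun.rpowAdd_smoothAbs_sub (hu : IsTestFun Ω u) (hζ : IsTestFun Ω ζ)
    (hζ₀ : ∀ x, 0 ≤ ζ x) (hp : p ≠ 0) (hκ : 0 < κ) :
    IsTestFun Ω fun x ↦ rpowAdd p (smoothAbs κ u) ζ x - κ := by
  have hsupp : (Function.support fun x ↦ rpowAdd p (smoothAbs κ u) ζ x - κ) ⊆
      tsupport u ∪ tsupport ζ := fun x hx ↦ by_contra fun h ↦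
    hx (rpowAdd_smoothAbs_sub_eq_zero hp hκ.le h)
  have hK : IsCompact (tsupport u ∪ tsupport ζ) := hu.2.1.isCompact.union hζ.2.1
  exact ⟨(contDiff_rpowAdd (contDiff_smoothAbs hκ hu.1) hζ.1 (smoothAbs_pos hκ u) hζ₀).sub
      contDiff_const, .of_support_subset_isCompact hK hsupp,
    (closure_minimal hsupp hK.isClosed).trans (union_subset hu.2.2 hζ.2.2)⟩

lemma tendsto_integral_mul_rpowAdd_smoothAbs_sub_rpow (hV : LocBddPotential Ω V)
    (hu : IsTestFun Ω u) (hζ : IsTestFun Ω ζ) (hζ₀ : ∀ x, 0 ≤ ζ x) (hp : 0 < p) :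
    Tendsto (fun κ ↦ ∫ x, V x * |rpowAdd p (smoothAbs κ u) ζ x - κ| ^ p) (𝓝[>] 0)
      (𝓝 ((∫ x, V x * |u x| ^ p) + ∫ x, V x * ζ x)) := by
  have hK : IsCompact (tsupport u ∪ tsupport ζ) := hu.2.1.isCompact.union hζ.2.1
  have hcont : ContinuousOn (fun κ ↦ ∫ x, V x * |rpowAdd p (smoothAbs κ u) ζ x - κ| ^ p)
      (Ici 0) := by
    refine continuousOn_integral_bilinear_of_locally_integrable_of_compact_support
      (.mul ℝ ℝ) (f := fun κ x ↦ |rpowAdd p (smoothAbs κ u) ζ x - κ| ^ p) hK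
      (Continuous.continuousOn ?_) (fun κ x hκ hx ↦ ?_)
      (hV.integrableOn hK (union_subset hu.2.2 hζ.2.2))
    · have hu' := hu.1.continuous
      have hζ' := hζ.1.continuous
      have hp' : 0 ≤ 1 / p := by positivity
      unfold Function.uncurry rpowAdd smoothAbs
      refine (((Continuous.rpow_const (.add (.rpow_const ?_ fun _ ↦ .inr hp.le) ?_)
        fun _ ↦ .inr hp').sub continuous_fst).abs).rpow_const fun _ ↦ .inr hp.le
      all_goals fun_prop
    · simp [rpowAdd_smoothAbs_sub_eq_zero hp.ne' hκ hx, Real.zero_rpow hp.ne']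
  have hzero (x) : V x * |rpowAdd p (smoothAbs 0 u) ζ x - 0| ^ p = V x * |u x| ^ p + V x * ζ x := by
    have hnonneg : 0 ≤ |u x| ^ p + ζ x := add_nonneg (by positivity) (hζ₀ x)
    have h₀ : smoothAbs 0 u x = |u x| := by simp [smoothAbs, Real.sqrt_sq_eq_abs]
    rw [sub_zero, rpowAdd, h₀, abs_of_nonneg (by positivity), ← Real.rpow_mul hnonneg,
      one_div_mul_cancel hp.ne', Real.rpow_one, mul_add]
  have hlim := (hcont 0 self_mem_Ici).tendsto.mono_left (nhdsWithin_mono 0 Ioi_subset_Ici_self)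
  simp only [hzero] at hlim
  rwa [integral_add (hu.integrable_potential_mul hp hV)
    (hV.integrable_mul hζ.1.continuous hζ.2.1 hζ.2.2)] at hlim

lemma IsCutoff.integral_mul_le (hζ : IsCutoff p k s t ζ) (hV : LocBddPotential Ω V)
    (ht : MeasurableSet t) (htc : IsCompact (closure t)) (htΩ : closure t ⊆ Ω)
    (hM : ∀ x ∈ t, |V x| ≤ M) : ∫ x, V x * ζ x ≤ M * volume.real t := by
  have hζt := hζ.isTestFun htc htΩ
  have htfin : volume t ≠ ⊤ := ((measure_mono subset_closure).trans_lt htc.measure_lt_top).ne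
  calc ∫ x, V x * ζ x ≤ ∫ x, t.indicator (fun _ ↦ M) x := by
        refine integral_mono (hV.integrable_mul hζt.1.continuous hζt.2.1 hζt.2.2)
          ((integrable_indicator_iff ht).2 (integrableOn_const htfin)) fun x ↦ ?_
        by_cases hx : x ∈ t
        · rw [indicator_of_mem hx]
          nlinarith [abs_le.1 (hM x hx), hζ.nonneg x, hζ.le_one x]
        · simp [hx, hζ.eq_zero x hx]
    _ = M * volume.real t := by rw [integral_indicator_const M ht, smul_eq_mul, mul_comm]

lemma EnergyNonneg.eventually_setIntegral_norm_fderiv_logProfile_le (hQ : EnergyNonneg Ω V p)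
    (hV : LocBddPotential Ω V) (hζ : IsCutoff p k s t ζ) (hp : 1 < p) (hs : MeasurableSet s)
    (ht : MeasurableSet t) (htc : IsCompact (closure t)) (htΩ : closure t ⊆ Ω)
    (hM : ∀ x ∈ t, |V x| ≤ M) (hu : IsTestFun Ω u) {η : ℝ} (hη : 0 < η) :
    ∀ᶠ κ in 𝓝[>] (0 : ℝ),
      min 1 (p - 1) * ∫ x in s, ‖fderiv ℝ (logProfile p (smoothAbs κ u)) x‖ ^ p ≤
        energyQ Ω V p u + (k + M) * volume.real t + η := by
  have hp₀ : 0 < p := by linarith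
  have hζt := hζ.isTestFun htc htΩ
  have htfin : volume t ≠ ⊤ := ((measure_mono subset_closure).trans_lt htc.measure_lt_top).ne
  have hpot := tendsto_integral_mul_rpowAdd_smoothAbs_sub_rpow hV hu hζt hζ.nonneg hp₀
  filter_upwards [hpot.eventually_lt_const (lt_add_of_pos_right _ hη), self_mem_nhdsWithin]
    with κ hκ_pot (hκ : 0 < κ)
  have hU := contDiff_smoothAbs hκ hu.1
  have hw := hu.rpowAdd_smoothAbs_sub hζt hζ.nonneg hp₀.ne' hκ
  have hlog : IntegrableOn (fun x ↦ ‖fderiv ℝ (logProfile p (smoothAbs κ u)) x‖ ^ p) s :=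
    ((((contDiff_logProfile hU (smoothAbs_pos hκ u)).continuous_fderiv (by simp)).norm.rpow_const
      fun _ ↦ .inr hp₀.le).continuousOn.integrableOn_compact htc).mono_set
        (hζ.subset.trans subset_closure)
  have hgrad := integral_add_integral_le (hw.integrable_norm_fderiv_rpow hp₀)
    (((integrable_indicator_iff hs).2 hlog).const_mul (min 1 (p - 1)))
    (hu.integrable_norm_fderiv_rpow hp₀)
    ((integrable_indicator_iff ht).2 (integrableOn_const (C := k) htfin)) fun x ↦ by
      have hux := hu.1.differentiable (by simp) x
      rw [fderiv_sub_const]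
      refine (hζ.norm_fderiv_rpowAdd_rpow_add_indicator_le hp (hU.differentiable (by simp) x)
        (smoothAbs_pos hκ u x)).trans ?_
      gcongr
      exact norm_fderiv_smoothAbs_le hκ hux
  rw [integral_const_mul, integral_indicator hs, integral_indicator_const k ht, smul_eq_mul]
    at hgrad
  have hQw := hQ _ hw
  rw [hw.energyQ_eq hp₀ hV] at hQw
  rw [hu.energyQ_eq hp₀ hV]
  linarith [hζ.integral_mul_le hV ht htc htΩ hM]

end LogEnergy

section AverageChain

lemma two_mul_measure_inter_lt_le {α : Type*} [MeasurableSpace α] {μ : Measure α} {s : Set α}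
    {v : α → ℝ} {N : ℝ} (hs : MeasurableSet s) (hs' : μ s ≠ ⊤) (hv : IntegrableOn v s μ)
    (hv₀ : ∀ x, 0 ≤ v x) (hN : 0 < N) (h : ⨍ x in s, v x ∂μ ≤ N) :
    2 * μ (s ∩ {x | 2 * N < v x}) ≤ μ s := by
  have hchebyshev := mul_meas_ge_le_integral_of_nonneg (Eventually.of_forall hv₀) hv (2 * N)
  rw [measureReal_def, Measure.restrict_apply' hs, ← measureReal_def,
    ← measure_smul_setAverage v hs', smul_eq_mul] at hchebyshev
  have hsub : s ∩ {x | 2 * N < v x} ⊆ {x | 2 * N ≤ v x} ∩ s :=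
    fun x hx ↦ ⟨(show 2 * N < v x from hx.2).le, hx.1⟩
  refine (mul_le_mul_right (measure_mono hsub) 2).trans ?_
  rw [← ENNReal.toReal_le_toReal (ENNReal.mul_ne_top (by simp)
    (measure_ne_top_of_subset inter_subset_right hs')) hs', ENNReal.toReal_mul]
  have hle := mul_le_mul_of_nonneg_left h (measureReal_nonneg (μ := μ) (s := s))
  refine le_of_mul_le_mul_left ?_ hN
  simp only [measureReal_def, ENNReal.toReal_ofNat] at *
  linarith

variable {E : Type*} [NormedAddCommGroup E] [NormedSpace ℝ E] [FiniteDimensional ℝ E]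
  [MeasurableSpace E] [BorelSpace E] (μ : Measure E) [μ.IsAddHaarMeasure] {v : E → ℝ} {y : E}
  {p ρ C : ℝ}

lemma abs_setAverage_sub_setAverage_rpow_le {A B : Set E} (hρ : 0 ≤ ρ) (hA : A ⊆ ball y ρ)
    (hB : B ⊆ ball y ρ) (hA₀ : μ A ≠ 0) (hB₀ : μ B ≠ 0) (hv : ContDiff ℝ 1 v) (hp : 1 ≤ p) :
    |(⨍ x in A, v x ∂μ) - ⨍ x in B, v x ∂μ| ^ p ≤ (2 * ρ) ^ p * 2 ^ finrank ℝ E *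
      μ.real (ball y ρ) * (∫ x in ball y ρ, ‖fderiv ℝ v x‖ ^ p ∂μ) / μ.real B / μ.real A := by
  have hp₀ : 0 ≤ p := by linarith
  have hball : IsCompact (closedBall y ρ) := isCompact_closedBall y ρ
  have hint : IntegrableOn v (ball y ρ) μ :=
    (hv.continuous.continuousOn.integrableOn_compact hball).mono_set ball_subset_closedBall
  have hDv : IntegrableOn (fun x ↦ ‖fderiv ℝ v x‖ ^ p) (ball y ρ) μ :=
    (((hv.continuous_fderiv one_ne_zero).norm.rpow_const
      fun _ ↦ .inr hp₀).continuousOn.integrableOn_compact hball).mono_set ball_subset_closedBall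
  have hA' := measure_ne_top_of_subset hA (measure_ball_lt_top (μ := μ)).ne
  have hB' := measure_ne_top_of_subset hB (measure_ball_lt_top (μ := μ)).ne
  have hle := enorm_setAverage_sub_setAverage_rpow_le μ measurableSet_ball (convex_ball y ρ) hA hB
    hA₀ hB₀ hA' hB' hv (hint.mono_set hA) (hint.mono_set hB) hp
  rw [lintegral_enorm_rpow_eq_ofReal hp₀ hDv] at hle
  replace hle := ENNReal.toReal_mono (by finiteness) (hle.trans (ENNReal.div_le_div_right
    (ENNReal.div_le_div_right (mul_le_mul_left (mul_le_mul_left (mul_le_mul_left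
      (ENNReal.rpow_le_rpow (ediam_ball_le y ρ) hp₀) _) _) _) _) _))
  simpa [ENNReal.toReal_div, ← ENNReal.toReal_rpow, hρ, measureReal_def,
    ENNReal.toReal_ofReal (integral_nonneg fun x ↦ (by positivity : 0 ≤ ‖fderiv ℝ v x‖ ^ p))]
    using hle

lemma setAverage_le_setAverage_add {A B : Set E} (hρ : 0 ≤ ρ) (hA : A ⊆ ball y ρ)
    (hB : B ⊆ ball y ρ) (hA₀ : μ A ≠ 0) (hB₀ : μ B ≠ 0) (hv : ContDiff ℝ 1 v) (hp : 1 ≤ p)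
    {a b : ℝ} (ha : μ.real (ball y ρ) ≤ a * μ.real A) (hb : μ.real (ball y ρ) ≤ b * μ.real B)
    (hC : ρ ^ p * ⨍ x in ball y ρ, ‖fderiv ℝ v x‖ ^ p ∂μ ≤ C) :
    ⨍ x in A, v x ∂μ ≤ (⨍ x in B, v x ∂μ) + (1 + 2 ^ p * 2 ^ finrank ℝ E * (a * b) * C) := by
  have hApos : 0 < μ.real A := ENNReal.toReal_pos hA₀
    (measure_ne_top_of_subset hA (measure_ball_lt_top (μ := μ)).ne)
  have hBpos : 0 < μ.real B := ENNReal.toReal_pos hB₀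
    (measure_ne_top_of_subset hB (measure_ball_lt_top (μ := μ)).ne)
  have hmean : 0 ≤ ⨍ x in ball y ρ, ‖fderiv ℝ v x‖ ^ p ∂μ := by
    rw [setAverage_eq]
    exact smul_nonneg (by positivity) (integral_nonneg fun x ↦ by positivity)
  have hball := measure_smul_setAverage (μ := μ) (fun x ↦ ‖fderiv ℝ v x‖ ^ p)
    (measure_ball_lt_top (x := y) (r := ρ)).ne
  rw [smul_eq_mul] at hball
  have hpow := calc |(⨍ x in A, v x ∂μ) - ⨍ x in B, v x ∂μ| ^ p
      ≤ _ := abs_setAverage_sub_setAverage_rpow_le μ hρ hA hB hA₀ hB₀ hv hp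
    _ = 2 ^ p * 2 ^ finrank ℝ E * (μ.real (ball y ρ) / μ.real A * (μ.real (ball y ρ) / μ.real B)) *
          (ρ ^ p * ⨍ x in ball y ρ, ‖fderiv ℝ v x‖ ^ p ∂μ) := by
        rw [← hball, Real.mul_rpow zero_le_two hρ]
        ring
    _ ≤ 2 ^ p * 2 ^ finrank ℝ E * (a * b) * C := by
        rw [← div_le_iff₀ hApos] at ha
        rw [← div_le_iff₀ hBpos] at hb
        have ha₀ : 0 ≤ a := le_trans (by positivity) ha
        have hb₀ : 0 ≤ b := le_trans (by positivity) hb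
        gcongr
  have hone : ∀ t : ℝ, 0 ≤ t → t ≤ 1 + t ^ p := fun t ht ↦ by
    rcases le_total t 1 with h | h
    · linarith [Real.rpow_nonneg ht p]
    · linarith [Real.self_le_rpow_of_one_le h hp]
  have habs := le_abs_self ((⨍ x in A, v x ∂μ) - ⨍ x in B, v x ∂μ)
  linarith [hone |(⨍ x in A, v x ∂μ) - ⨍ x in B, v x ∂μ| (abs_nonneg _)]

lemma addHaar_real_ball_mul (x y : E) {r : ℝ} (hr : 0 < r) (s : ℝ) :
    μ.real (ball x (r * s)) = r ^ finrank ℝ E * μ.real (ball y s) := by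
  simp only [measureReal_def, Measure.addHaar_ball_mul_of_pos μ x hr, ENNReal.toReal_mul,
    Measure.addHaar_ball_center μ y, ENNReal.toReal_ofReal (pow_nonneg hr.le _)]

lemma setAverage_ball_div_two_pow_le {R : ℝ} (hR : 0 < R) (hv : ContDiff ℝ 1 v) (hp : 1 ≤ p)
    (n : ℕ) (hC : ∀ j < n, (R / 2 ^ j) ^ p *
      ⨍ x in ball y (R / 2 ^ j), ‖fderiv ℝ v x‖ ^ p ∂μ ≤ C) :
    ⨍ x in ball y (R / 2 ^ n), v x ∂μ ≤
      (⨍ x in ball y R, v x ∂μ) + n * (1 + 2 ^ p * 2 ^ finrank ℝ E * 2 ^ finrank ℝ E * C) := by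
  induction n with
  | zero => simp
  | succ n ih =>
    have hr : 0 < R / 2 ^ n := by positivity
    have hhalf : R / 2 ^ n = 2 * (R / 2 ^ (n + 1)) := by rw [pow_succ]; field_simp
    have hstep := setAverage_le_setAverage_add μ hr.le (ball_subset_ball (by linarith)) subset_rfl
      (measure_ball_pos μ y (by positivity : 0 < R / 2 ^ (n + 1))).ne'
      (measure_ball_pos μ y hr).ne' hv hp (a := 2 ^ finrank ℝ E)
      ((congrArg _ (congrArg _ hhalf)).trans (addHaar_real_ball_mul μ y y two_pos _)).le
      (one_mul _).ge (hC n n.lt_succ_self)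
    have hind := ih fun j hj ↦ hC j (hj.trans n.lt_succ_self)
    push_cast
    linarith

end AverageChain

section LevelSets

variable {d : ℕ} {Ω E : Set (Euc d)} {V u : Euc d → ℝ} {x₀ : Euc d} {p R : ℝ}

/-- The energy functional controls the `L^p` norm on `s`. -/
def EnergyControls (Ω : Set (Euc d)) (V : Euc d → ℝ) (p : ℝ) (s : Set (Euc d)) : Prop :=
  ∃ C, 0 < C ∧ ∀ u, IsTestFun Ω u → ∫ x in s, |u x| ^ p ≤ C * energyQ Ω V p u

lemma LocBddPotential.exists_nonneg_bound (hV : LocBddPotential Ω V) {K : Set (Euc d)}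
    (hK : IsCompact K) (hKΩ : K ⊆ Ω) : ∃ M, 0 ≤ M ∧ ∀ x ∈ K, |V x| ≤ M := by
  obtain ⟨M, hM⟩ := hV.2 K hKΩ hK
  exact ⟨max M 0, le_max_right _ _, fun x hx ↦ (hM x hx).trans (le_max_left _ _)⟩

lemma EnergyNonneg.exists_eventually_setAverage_norm_fderiv_logProfile_le
    (hQ : EnergyNonneg Ω V p) (hV : LocBddPotential Ω V) (hp : 1 < p) {K : Set (Euc d)}
    (hK : IsCompact K) (hKΩ : K ⊆ Ω) {R₀ : ℝ} (hR₀ : 0 < R₀) :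
    ∃ C, 0 < C ∧ ∀ y ρ, 0 < ρ → ρ ≤ R₀ → closedBall y (2 * ρ) ⊆ K → ∀ u, IsTestFun Ω u →
      energyQ Ω V p u ≤ volume.real (ball y ρ) → ∀ᶠ κ in 𝓝[>] (0 : ℝ),
        ρ ^ p * ⨍ x in ball y ρ, ‖fderiv ℝ (logProfile p (smoothAbs κ u)) x‖ ^ p ≤ C := by
  obtain ⟨M, hM, hVM⟩ := hV.exists_nonneg_bound hK hKΩ
  obtain ⟨k, hk, hcutoff⟩ := exists_isCutoff_ball (Euc d) hp.le
  have hc : 0 < min 1 (p - 1) := lt_min one_pos (by linarith)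
  refine ⟨(2 * R₀ ^ p + (k + M * R₀ ^ p) * 2 ^ d) / min 1 (p - 1), by positivity,
    fun y ρ hρ hρR hyK u hu hQu ↦ ?_⟩
  obtain ⟨ζ, hζ⟩ := hcutoff y ρ (2 * ρ) hρ (by linarith)
  have hclosure : closure (ball y (2 * ρ)) ⊆ K := closure_ball_subset_closedBall.trans hyK
  have hvol : 0 < volume.real (ball y ρ) :=
    ENNReal.toReal_pos (measure_ball_pos volume y hρ).ne' measure_ball_lt_top.ne
  filter_upwards [hQ.eventually_setIntegral_norm_fderiv_logProfile_le hV hζ hp measurableSet_ball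
    measurableSet_ball (hK.of_isClosed_subset isClosed_closure hclosure) (hclosure.trans hKΩ)
    (fun x hx ↦ hVM x (hclosure (subset_closure hx))) hu hvol] with κ hκ
  rw [two_mul, add_sub_cancel_right, ← two_mul, addHaar_real_ball_mul volume y y two_pos,
    finrank_euclideanSpace_fin, ← measure_smul_setAverage _ measure_ball_lt_top.ne,
    smul_eq_mul] at hκ
  rw [le_div_iff₀ hc]
  set m := volume.real (ball y ρ)
  set I := ⨍ x in ball y ρ, ‖fderiv ℝ (logProfile p (smoothAbs κ u)) x‖ ^ p
  have : 0 < ρ ^ p := by positivity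
  have hle : min 1 (p - 1) * I ≤ 2 + (k / ρ ^ p + M) * 2 ^ d :=
    le_of_mul_le_mul_left (by linarith) hvol
  calc ρ ^ p * I * min 1 (p - 1) = ρ ^ p * (min 1 (p - 1) * I) := by ring
    _ ≤ ρ ^ p * (2 + (k / ρ ^ p + M) * 2 ^ d) := by gcongr
    _ = 2 * ρ ^ p + (k + M * ρ ^ p) * 2 ^ d := by field_simp
    _ ≤ 2 * R₀ ^ p + (k + M * R₀ ^ p) * 2 ^ d := by gcongr

lemma setAverage_logProfile_le {α : Type*} [MeasurableSpace α] {μ : Measure α} {s : Set α}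
    {u : α → ℝ} {κ : ℝ} (hp : 1 ≤ p) (hκ : 0 < κ) (hκ₁ : κ ≤ 1) (hs : μ s ≠ 0) (hs' : μ s ≠ ⊤)
    (hu : IntegrableOn (fun x ↦ |u x| ^ p) s μ) :
    ⨍ x in s, logProfile p (smoothAbs κ u) x ∂μ ≤ 2 ^ (p - 1) * ((⨍ x in s, |u x| ^ p ∂μ) + 1) := by
  have hone : IntegrableOn (fun _ ↦ (1 : ℝ)) s μ := integrableOn_const hs'
  calc ⨍ x in s, logProfile p (smoothAbs κ u) x ∂μ
      ≤ ⨍ x in s, 2 ^ (p - 1) * (|u x| ^ p + 1) ∂μ := by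
        rw [setAverage_eq, setAverage_eq, smul_eq_mul, smul_eq_mul]
        refine mul_le_mul_of_nonneg_left (integral_mono_of_nonneg ?_ ((hu.add hone).const_mul _) ?_)
          (by positivity)
        · exact Eventually.of_forall fun x ↦
            logProfile_nonneg (by linarith) (smoothAbs_pos hκ u x).le
        · exact Eventually.of_forall fun x ↦ (logProfile_le_rpow hp
            (smoothAbs_pos hκ u x).le).trans (smoothAbs_rpow_le hp hκ.le hκ₁ u x)
    _ = 2 ^ (p - 1) * ((⨍ x in s, |u x| ^ p ∂μ) + 1) := by
        have hreal : μ.real s ≠ 0 := (ENNReal.toReal_pos hs hs').ne'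
        simp only [setAverage_eq, integral_const_mul, integral_add hu hone, smul_eq_mul,
          setIntegral_const]
        field_simp

lemma contDiff_logProfile_smoothAbs {κ : ℝ} (hu : IsTestFun Ω u) (hκ : 0 < κ) :
    ContDiff ℝ 1 (logProfile p (smoothAbs κ u)) :=
  (contDiff_logProfile (contDiff_smoothAbs hκ hu.1) (smoothAbs_pos hκ u)).of_le (by simp)

lemma EnergyNonneg.exists_eventually_setAverage_ball_div_two_pow_le (hQ : EnergyNonneg Ω V p)
    (hV : LocBddPotential Ω V) (hp : 1 < p) {K : Set (Euc d)} (hK : IsCompact K) (hKΩ : K ⊆ Ω)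
    (hR : 0 < R) :
    ∃ B, 0 < B ∧ ∀ y, closedBall y (2 * R) ⊆ K → ∀ (n : ℕ) u, IsTestFun Ω u →
      energyQ Ω V p u ≤ volume.real (ball y (R / 2 ^ n)) → ∀ᶠ κ in 𝓝[>] (0 : ℝ),
        ⨍ x in ball y (R / 2 ^ n), logProfile p (smoothAbs κ u) x ≤
          (⨍ x in ball y R, logProfile p (smoothAbs κ u) x) + n * B := by
  obtain ⟨C, hC, hgrad⟩ :=
    hQ.exists_eventually_setAverage_norm_fderiv_logProfile_le hV hp hK hKΩ hR
  refine ⟨1 + 2 ^ p * 2 ^ d * 2 ^ d * C, by positivity, fun y hy n u hu hQu ↦ ?_⟩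
  have hscales : ∀ᶠ κ in 𝓝[>] (0 : ℝ), ∀ j ∈ Finset.range n, (R / 2 ^ j) ^ p *
      ⨍ x in ball y (R / 2 ^ j), ‖fderiv ℝ (logProfile p (smoothAbs κ u)) x‖ ^ p ≤ C := by
    refine (Finset.eventually_all _).2 fun j hj ↦ ?_
    have hle : R / 2 ^ j ≤ R := div_le_self hR.le (one_le_pow₀ one_le_two)
    have hmono : R / 2 ^ n ≤ R / 2 ^ j := by
      gcongr
      exacts [one_le_two, (Finset.mem_range.1 hj).le]
    exact hgrad y _ (by positivity) hle ((closedBall_subset_closedBall (by linarith)).trans hy) u hu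
      (hQu.trans (measureReal_mono (ball_subset_ball hmono) measure_ball_lt_top.ne))
  filter_upwards [hscales, self_mem_nhdsWithin] with κ hκ_scales (hκ : 0 < κ)
  simpa only [finrank_euclideanSpace_fin] using
    setAverage_ball_div_two_pow_le volume hR (contDiff_logProfile_smoothAbs hu hκ) hp.le n
      fun j hj ↦ hκ_scales j (Finset.mem_range.2 hj)

lemma EnergyNonneg.exists_eventually_setAverage_ball_le (hQ : EnergyNonneg Ω V p)
    (hV : LocBddPotential Ω V) (hp : 1 < p) (hR : 0 < R) (hx₀ : closedBall x₀ (8 * R) ⊆ Ω)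
    (hE : E ⊆ ball x₀ R) (hE₀ : volume E ≠ 0) (hEQ : EnergyControls Ω V p E) :
    ∃ A, 0 < A ∧ ∀ y ∈ ball x₀ (2 * R), ∀ u, IsTestFun Ω u →
      energyQ Ω V p u ≤ volume.real (ball x₀ R) → ∀ᶠ κ in 𝓝[>] (0 : ℝ),
        ⨍ x in ball y R, logProfile p (smoothAbs κ u) x ≤ A := by
  obtain ⟨C, hC, hgrad⟩ := hQ.exists_eventually_setAverage_norm_fderiv_logProfile_le hV hp
    (isCompact_closedBall x₀ (8 * R)) hx₀ (by positivity : 0 < 4 * R)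
  obtain ⟨CE, hCE, hEQ⟩ := hEQ
  have hE' : volume E ≠ ⊤ := measure_ne_top_of_subset hE measure_ball_lt_top.ne
  have hEpos : 0 < volume.real E := ENNReal.toReal_pos hE₀ hE'
  set b := volume.real (ball x₀ (4 * R)) / volume.real E
  refine ⟨2 ^ (p - 1) * (CE * b + 1) + (1 + 2 ^ p * 2 ^ d * (4 ^ d * b) * C), by positivity,
    fun y hy u hu hQu ↦ ?_⟩
  replace hQu : energyQ Ω V p u ≤ volume.real (ball x₀ (4 * R)) :=
    hQu.trans (measureReal_mono (ball_subset_ball (by linarith)) measure_ball_lt_top.ne)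
  filter_upwards [hgrad x₀ (4 * R) (by positivity) le_rfl
    (closedBall_subset_closedBall (by linarith)) u hu hQu, Ioc_mem_nhdsGT one_pos]
    with κ hκ_grad hκ
  have hon_E : ⨍ x in E, logProfile p (smoothAbs κ u) x ≤ 2 ^ (p - 1) * (CE * b + 1) := by
    refine (setAverage_logProfile_le hp.le hκ.1 hκ.2 hE₀ hE'
      (hu.integrable_abs_rpow (by linarith)).integrableOn).trans ?_
    gcongr
    rw [setAverage_eq, smul_eq_mul, inv_mul_le_iff₀ hEpos, mul_left_comm,
      mul_div_cancel₀ _ hEpos.ne']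
    exact (hEQ u hu).trans (by gcongr)
  have hto_E := setAverage_le_setAverage_add volume (by positivity)
    (ball_subset_ball' (by linarith [mem_ball.1 hy]) : ball y R ⊆ ball x₀ (4 * R))
    (hE.trans (ball_subset_ball (by linarith))) (measure_ball_pos volume y hR).ne' hE₀
    (contDiff_logProfile_smoothAbs hu hκ.1) hp.le
    (addHaar_real_ball_mul volume x₀ y four_pos R).le (div_mul_cancel₀ _ hEpos.ne').ge hκ_grad
  rw [finrank_euclideanSpace_fin] at hto_E
  linarith

lemma EnergyNonneg.exists_two_mul_measure_ball_inter_lt_le (hQ : EnergyNonneg Ω V p)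
    (hV : LocBddPotential Ω V) (hp : 1 < p) (hR : 0 < R) (hx₀ : closedBall x₀ (8 * R) ⊆ Ω)
    (hE : E ⊆ ball x₀ R) (hE₀ : volume E ≠ 0) (hEQ : EnergyControls Ω V p E) :
    ∃ A B, 0 < B ∧ ∀ (n : ℕ) u, IsTestFun Ω u →
      energyQ Ω V p u ≤ volume.real (ball x₀ (R / 2 ^ n)) → ∀ y ∈ ball x₀ (2 * R),
        2 * volume (ball y (R / 2 ^ n) ∩ {x | Real.exp (2 * (A + n * B)) < |u x|}) ≤
          volume (ball y (R / 2 ^ n)) := by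
  have hle : ∀ n : ℕ, R / 2 ^ n ≤ R := fun n ↦ div_le_self hR.le (one_le_pow₀ one_le_two)
  obtain ⟨A, hA, hunit⟩ := hQ.exists_eventually_setAverage_ball_le hV hp hR hx₀ hE hE₀ hEQ
  obtain ⟨B, hB, hchain⟩ := hQ.exists_eventually_setAverage_ball_div_two_pow_le hV hp
    (isCompact_closedBall x₀ (8 * R)) hx₀ hR
  refine ⟨A, B, hB, fun n u hu hQu y hy ↦ ?_⟩
  obtain ⟨κ, ⟨hκ_unit, hκ_chain⟩, hκ : 0 < κ⟩ :=
    (((hunit y hy u hu (hQu.trans (measureReal_mono (ball_subset_ball (hle n))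
      measure_ball_lt_top.ne))).and (hchain y
        (closedBall_subset_closedBall' (by linarith [mem_ball.1 hy])) n u hu (by
          rwa [Measure.addHaar_real_ball_center] at hQu ⊢))).and self_mem_nhdsWithin).exists
  have hint : IntegrableOn (logProfile p (smoothAbs κ u)) (ball y (R / 2 ^ n)) :=
    ((contDiff_logProfile_smoothAbs hu hκ).continuous.continuousOn.integrableOn_compact
      (isCompact_closedBall _ _)).mono_set ball_subset_closedBall
  have hlevel : {x | Real.exp (2 * (A + n * B)) < |u x|} ⊆
      {x | 2 * (A + n * B) < logProfile p (smoothAbs κ u) x} := fun x hx ↦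
    lt_logProfile_of_exp_lt (by linarith) ((mem_ofPred.1 hx).trans_le (abs_le_smoothAbs κ u x))
  exact (mul_le_mul_right (measure_mono (inter_subset_inter_right _ hlevel)) 2).trans
    (two_mul_measure_inter_lt_le measurableSet_ball measure_ball_lt_top.ne hint
      (fun x ↦ logProfile_nonneg (by linarith) (smoothAbs_pos hκ u x).le) (by positivity)
      (by linarith))

end LevelSets

section LocalControl

lemma le_two_mul_of_le_mul_pow_add_mul_succ {m : ℕ → ℝ} {θ L X S : ℝ} (hθ : 0 ≤ θ) (hL : 1 ≤ L)
    (hX : 0 ≤ X) (hθL : θ * L ≤ 1 / 2) (hS₀ : 0 ≤ S) (hS : ∀ k, m k ≤ S)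
    (h : ∀ k, m k ≤ X * L ^ k + θ * m (k + 1)) : m 0 ≤ 2 * X := by
  have hiter : ∀ n, m 0 ≤ 2 * X * (1 - (1 / 2) ^ n) + θ ^ n * m n := fun n ↦ by
    induction n with
    | zero => simp
    | succ n ih =>
      have hstep : θ ^ n * m n ≤ θ ^ n * (X * L ^ n + θ * m (n + 1)) := by
        gcongr
        exact h n
      have hterm : X * (θ * L) ^ n ≤ X * (1 / 2) ^ n := by gcongr
      rw [mul_pow] at hterm
      rw [pow_succ, pow_succ]
      linarith
  have hhalf : θ ≤ 1 / 2 := (le_mul_of_one_le_right hθ hL).trans hθL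
  have hbound (n : ℕ) : m 0 ≤ 2 * X + (1 / 2) ^ n * S := by
    have htail : θ ^ n * m n ≤ (1 / 2) ^ n * S :=
      (mul_le_mul_of_nonneg_left (hS n) (by positivity)).trans (by gcongr)
    have : 0 ≤ 2 * X * (1 / 2) ^ n := by positivity
    linarith [hiter n]
  have hlim : Tendsto (fun n : ℕ ↦ 2 * X + (1 / 2) ^ n * S) atTop (𝓝 (2 * X + 0 * S)) :=
    ((tendsto_pow_atTop_nhds_zero_of_lt_one (by norm_num) (by norm_num)).mul_const S).const_add _
  simpa using ge_of_tendsto' hlim hbound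

variable {d : ℕ} {Ω E s : Set (Euc d)} {V : Euc d → ℝ} {x₀ : Euc d} {p R : ℝ}

lemma EnergyControls.mono (h : EnergyControls Ω V p s) (hp : 0 < p) (hE : E ⊆ s) :
    EnergyControls Ω V p E := by
  obtain ⟨C, hC, hCs⟩ := h
  exact ⟨C, hC, fun u hu ↦ (setIntegral_mono_set (hu.integrable_abs_rpow hp).integrableOn
    (Eventually.of_forall fun x ↦ by positivity) hE.eventuallyLE).trans (hCs u hu)⟩

lemma EnergyNonneg.energyControls_of_forall_energyQ_le_one (hQ : EnergyNonneg Ω V p)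
    (hV : LocBddPotential Ω V) (hp : 0 < p) {C : ℝ} (hC : 0 < C)
    (h : ∀ u, IsTestFun Ω u → energyQ Ω V p u ≤ 1 → ∫ x in s, |u x| ^ p ≤ C) :
    EnergyControls Ω V p s := by
  refine ⟨C, hC, fun u hu ↦ ?_⟩
  suffices ∀ T, energyQ Ω V p u < T → (∫ x in s, |u x| ^ p) / C ≤ T by
    rw [← div_le_iff₀' hC]
    exact le_of_forall_gt_imp_ge_of_dense this
  intro T hT
  have hT₀ : 0 < T := (hQ u hu).trans_lt hT
  have hscale : |(T ^ p⁻¹)⁻¹| ^ p = T⁻¹ := by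
    rw [abs_of_pos (by positivity), Real.inv_rpow (by positivity),
      Real.rpow_inv_rpow hT₀.le hp.ne']
  have hle := h _ (hu.const_smul (T ^ p⁻¹)⁻¹) (by
    rw [hu.energyQ_const_smul hp hV, hscale, inv_mul_le_one₀ hT₀]
    exact hT.le)
  rwa [setIntegral_abs_const_smul_rpow, hscale, inv_mul_le_iff₀ hT₀, ← div_le_iff₀ hC] at hle

lemma EnergyNonneg.exists_two_mul_measure_ball_inter_rpow_le (hQ : EnergyNonneg Ω V p)
    (hV : LocBddPotential Ω V) (hp : 1 < p) (hR : 0 < R) (hx₀ : closedBall x₀ (8 * R) ⊆ Ω)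
    (hE : E ⊆ ball x₀ R) (hE₀ : volume E ≠ 0) (hEQ : EnergyControls Ω V p E) :
    ∃ A L, 0 < A ∧ 1 ≤ L ∧ ∀ (n : ℕ) u, IsTestFun Ω u → energyQ Ω V p u ≤ 1 →
      ∃ l, 0 ≤ l ∧ l ^ p ≤ A * L ^ n ∧ ∀ y ∈ ball x₀ (2 * R),
        2 * volume (ball y (R / 2 ^ n) ∩ {x | l < |u x|}) ≤ volume (ball y (R / 2 ^ n)) := by
  have hp₀ : 0 < p := by linarith
  obtain ⟨A, B, hB, hlevel⟩ :=
    hQ.exists_two_mul_measure_ball_inter_lt_le hV hp hR hx₀ hE hE₀ hEQ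
  set m : ℝ := volume.real (ball x₀ R)
  have hm : 0 < m := ENNReal.toReal_pos (measure_ball_pos volume x₀ hR).ne' measure_ball_lt_top.ne
  refine ⟨Real.exp (2 * p * A) / m, 2 ^ d * Real.exp (2 * p * B), by positivity,
    one_le_mul_of_one_le_of_one_le (one_le_pow₀ one_le_two) (Real.one_le_exp (by positivity)),
    fun n u hu hQu ↦ ?_⟩
  have hvol : 2 ^ (d * n) * volume.real (ball x₀ (R / 2 ^ n)) = m := by
    have := addHaar_real_ball_mul volume x₀ x₀ (by positivity : (0 : ℝ) < 2 ^ n) (R / 2 ^ n)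
    rw [mul_div_cancel₀ _ (by positivity), finrank_euclideanSpace_fin] at this
    rw [mul_comm d, pow_mul]
    exact this.symm
  set c := volume.real (ball x₀ (R / 2 ^ n))
  have hc : 0 < c := pos_of_mul_pos_right (hvol ▸ hm) (by positivity)
  have hcp : (c ^ p⁻¹) ^ p = c := Real.rpow_inv_rpow hc.le hp₀.ne'
  refine ⟨Real.exp (2 * (A + n * B)) / c ^ p⁻¹, by positivity, le_of_eq ?_, fun y hy ↦ ?_⟩
  · rw [Real.div_rpow (by positivity) (by positivity), hcp, ← Real.exp_mul, ← hvol, mul_pow,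
      ← pow_mul, ← Real.exp_nat_mul, div_mul_eq_mul_div, mul_left_comm,
      mul_div_mul_left _ _ (by positivity), ← Real.exp_add]
    ring_nf
  · have hscale := hlevel n _ (hu.const_smul (c ^ p⁻¹)) (by
      rw [hu.energyQ_const_smul hp₀ hV, abs_of_pos (by positivity), hcp]
      exact mul_le_of_le_one_right hc.le hQu) y hy
    simpa only [Pi.smul_apply, smul_eq_mul, abs_mul, abs_of_pos (by positivity : 0 < c ^ p⁻¹),
      ← div_lt_iff₀' (by positivity : 0 < c ^ p⁻¹)] using hscale

lemma EnergyNonneg.exists_setIntegral_ball_abs_rpow_le (hQ : EnergyNonneg Ω V p)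
    (hV : LocBddPotential Ω V) (hp : 1 < p) {M : ℝ}
    (hM : ∀ x ∈ ball x₀ (2 * R), |V x| ≤ M) :
    ∃ K, 0 < K ∧ ∀ r δ l u, 0 < δ → 8 * δ ≤ r → r ≤ R → 0 ≤ l → IsTestFun Ω u →
      (∀ y ∈ ball x₀ (2 * R),
        2 * volume (ball y δ ∩ {x | l < |u x|}) ≤ volume (ball y δ)) →
      ∫ x in ball x₀ (2 * R - r), |u x| ^ p ≤
        2 ^ (p - 1) * l ^ p * volume.real (ball x₀ (2 * R)) + 4 ^ p * 2 ^ d * δ ^ p *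
          (energyQ Ω V p u + (M + K / r ^ p) * ∫ x in ball x₀ (2 * R - r / 2), |u x| ^ p) := by
  obtain ⟨k, hk, hcutoff⟩ := exists_isCutoff_ball (Euc d) hp.le
  refine ⟨k * 4 ^ p, by positivity, fun r δ l u hδ hδr hrR hl₀ hu hl ↦ ?_⟩
  have hr : 0 < r := by linarith
  obtain ⟨ζ, hζ⟩ := hcutoff x₀ (2 * R - 3 * r / 4) (2 * R - r / 2) (by linarith) (by linarith)
  have hcacc := hQ.setIntegral_norm_fderiv_rpow_le hV hζ hp measurableSet_ball measurableSet_ball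
    (fun x hx ↦ hM x (ball_subset_ball (by linarith) hx)) hu
  rw [show 2 * R - r / 2 - (2 * R - 3 * r / 4) = r / 4 by ring,
    Real.div_rpow hr.le (by norm_num), div_div_eq_mul_div] at hcacc
  have hsmall := setIntegral_ball_norm_rpow_le volume (hu.1.of_le (mod_cast le_top))
    (r := 2 * R - r + δ) hδ hl₀ (fun y hy ↦ hl y (ball_subset_ball (by linarith) hy)) hp.le
  have hgrad : ∫ x in ball x₀ (2 * R - r + δ + δ), ‖fderiv ℝ u x‖ ^ p ≤
      ∫ x in ball x₀ (2 * R - 3 * r / 4), ‖fderiv ℝ u x‖ ^ p :=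
    setIntegral_mono_set (hu.integrable_norm_fderiv_rpow (by linarith)).integrableOn
      (Eventually.of_forall fun x ↦ by positivity)
      (ball_subset_ball (by linarith)).eventuallyLE
  have hvol : volume.real (ball x₀ (2 * R - r + δ)) ≤ volume.real (ball x₀ (2 * R)) :=
    measureReal_mono (ball_subset_ball (by linarith)) measure_ball_lt_top.ne
  rw [add_sub_cancel_right, finrank_euclideanSpace_fin, Real.mul_rpow zero_le_two hδ.le,
    ← mul_assoc, ← Real.mul_rpow zero_le_two zero_le_two, mul_right_comm (_ ^ p)] at hsmall
  norm_num only at hsmall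
  exact hsmall.trans (by gcongr; exact hgrad.trans hcacc)

lemma EnergyNonneg.exists_setIntegral_ball_abs_rpow_le_of_ball_div (hQ : EnergyNonneg Ω V p)
    (hV : LocBddPotential Ω V) (hp : 1 < p) {M : ℝ} (hM₀ : 0 ≤ M)
    (hM : ∀ x ∈ ball x₀ (2 * R), |V x| ≤ M) :
    ∃ K, 0 < K ∧ ∀ r N l u, 0 < r → r ≤ R → 8 ≤ N → 0 ≤ l → IsTestFun Ω u →
      (∀ y ∈ ball x₀ (2 * R),
        2 * volume (ball y (r / N) ∩ {x | l < |u x|}) ≤ volume (ball y (r / N))) →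
      ∫ x in ball x₀ (2 * R - r), |u x| ^ p ≤
        2 ^ (p - 1) * l ^ p * volume.real (ball x₀ (2 * R)) + 4 ^ p * 2 ^ d / N ^ p *
          (R ^ p * energyQ Ω V p u +
            (R ^ p * M + K) * ∫ x in ball x₀ (2 * R - r / 2), |u x| ^ p) := by
  obtain ⟨K, hK, hstep⟩ := hQ.exists_setIntegral_ball_abs_rpow_le hV hp hM
  refine ⟨K, hK, fun r N l u hr hrR hN hl₀ hu hl ↦ ?_⟩
  have hN₀ : 0 < N := by linarith
  have hδ : 8 * (r / N) ≤ r := by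
    rw [← mul_div_assoc, div_le_iff₀ hN₀, mul_comm]
    gcongr
  have hQu := hQ u hu
  have : 0 ≤ ∫ x in ball x₀ (2 * R - r / 2), |u x| ^ p := integral_nonneg fun x ↦ by positivity
  refine (hstep r (r / N) l u (by positivity) hδ hrR hl₀ hu hl).trans ?_
  rw [add_le_add_iff_left, Real.div_rpow hr.le hN₀.le]
  set m := ∫ x in ball x₀ (2 * R - r / 2), |u x| ^ p
  calc 4 ^ p * 2 ^ d * (r ^ p / N ^ p) * (energyQ Ω V p u + (M + K / r ^ p) * m)
      = 4 ^ p * 2 ^ d / N ^ p * (r ^ p * energyQ Ω V p u + (r ^ p * M + K) * m) := by field_simp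
    _ ≤ _ := by gcongr

lemma EnergyNonneg.exists_setIntegral_ball_sub_div_two_pow_le (hQ : EnergyNonneg Ω V p)
    (hV : LocBddPotential Ω V) (hp : 1 < p) (hR : 0 < R) (hx₀ : closedBall x₀ (8 * R) ⊆ Ω)
    (hE : E ⊆ ball x₀ R) (hE₀ : volume E ≠ 0) (hEQ : EnergyControls Ω V p E) :
    ∃ X L θ, 0 < X ∧ 1 ≤ L ∧ 0 ≤ θ ∧ θ * L ≤ 1 / 2 ∧
      ∀ u, IsTestFun Ω u → energyQ Ω V p u ≤ 1 → ∀ k : ℕ,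
        ∫ x in ball x₀ (2 * R - R / 2 ^ k), |u x| ^ p ≤
          X * L ^ k + θ * ∫ x in ball x₀ (2 * R - R / 2 ^ (k + 1)), |u x| ^ p := by
  have hp₀ : 0 < p := by linarith
  obtain ⟨M, hM, hVM⟩ := hV.exists_nonneg_bound (isCompact_closedBall x₀ (8 * R)) hx₀
  obtain ⟨A, L, hA, hL, hlevel⟩ :=
    hQ.exists_two_mul_measure_ball_inter_rpow_le hV hp hR hx₀ hE hE₀ hEQ
  obtain ⟨K, hK, hstep⟩ := hQ.exists_setIntegral_ball_abs_rpow_le_of_ball_div hV hp hM fun x hx ↦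
    hVM x (ball_subset_closedBall (ball_subset_ball (by linarith : 2 * R ≤ 8 * R) hx))
  set v := volume.real (ball x₀ (2 * R))
  set D : ℝ := R ^ p * M + K
  have hpow : Tendsto (fun ℓ : ℕ ↦ (2 : ℝ) ^ ℓ) atTop atTop :=
    tendsto_pow_atTop_atTop_of_one_lt one_lt_two
  obtain ⟨ℓ, hℓ, hℓL⟩ : ∃ ℓ : ℕ, 8 ≤ (2 : ℝ) ^ ℓ ∧ 2 * (4 ^ p * 2 ^ d * D * L) ≤ (2 ^ ℓ) ^ p :=
    ((hpow.eventually_ge_atTop 8).and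
      (((tendsto_rpow_atTop hp₀).comp hpow).eventually_ge_atTop _)).exists
  set B : ℝ := 4 ^ p * 2 ^ d / (2 ^ ℓ) ^ p
  refine ⟨2 ^ (p - 1) * (A * L ^ ℓ) * v + B * R ^ p, L, B * D, by positivity, hL,
    by positivity, ?_, fun u hu hQu k ↦ ?_⟩
  · rw [div_mul_eq_mul_div, div_mul_eq_mul_div, div_le_iff₀ (by positivity)]
    linarith
  obtain ⟨l, hl₀, hl, hlu⟩ := hlevel (k + ℓ) u hu hQu
  rw [pow_add, ← div_div] at hlu
  rw [pow_succ, ← div_div]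
  set m := ∫ x in ball x₀ (2 * R - R / 2 ^ k / 2), |u x| ^ p
  calc _ ≤ 2 ^ (p - 1) * l ^ p * v + B * (R ^ p * energyQ Ω V p u + D * m) :=
        hstep _ _ l u (by positivity) (div_le_self hR.le (one_le_pow₀ one_le_two)) hℓ hl₀ hu hlu
    _ ≤ 2 ^ (p - 1) * (A * L ^ (k + ℓ)) * v + B * (R ^ p * L ^ k + D * m) := by
      gcongr
      exact hQu.trans (one_le_pow₀ hL)
    _ = _ := by ring

lemma EnergyNonneg.energyControls_ball (hQ : EnergyNonneg Ω V p) (hV : LocBddPotential Ω V)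
    (hp : 1 < p) (hR : 0 < R) (hx₀ : closedBall x₀ (8 * R) ⊆ Ω) (hE : E ⊆ ball x₀ R)
    (hE₀ : volume E ≠ 0) (hEQ : EnergyControls Ω V p E) : EnergyControls Ω V p (ball x₀ R) := by
  have hp₀ : 0 < p := by linarith
  obtain ⟨X, L, θ, hX, hL, hθ, hθL, hstep⟩ :=
    hQ.exists_setIntegral_ball_sub_div_two_pow_le hV hp hR hx₀ hE hE₀ hEQ
  refine hQ.energyControls_of_forall_energyQ_le_one hV hp₀ (C := 2 * X) (by positivity)
    fun u hu hQu ↦ ?_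
  have hle := le_two_mul_of_le_mul_pow_add_mul_succ
    (m := fun k ↦ ∫ x in ball x₀ (2 * R - R / 2 ^ k), |u x| ^ p) hθ hL hX.le hθL
    (integral_nonneg fun x ↦ by positivity)
    (fun k ↦ setIntegral_le_integral (hu.integrable_abs_rpow hp₀)
      (Eventually.of_forall fun x ↦ by positivity)) (hstep u hu hQu)
  rwa [pow_zero, div_one, two_mul R, add_sub_cancel_right] at hle

end LocalControl

section Weight

variable {X ι : Type*} [TopologicalSpace X] [MeasurableSpace X] [OpensMeasurableSpace X]
  {μ : Measure X} {g : ι → X → ℝ} {q : ι → ℝ}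

lemma exists_continuous_forall_integral_mul_le {κ : Type*} [Countable κ] {f : κ → X → ℝ}
    {C : κ → ℝ} (hf : ∀ k, Continuous (f k)) (hf_mem : ∀ k x, f k x ∈ Icc (0 : ℝ) 1)
    (hg : ∀ i, Integrable (g i) μ) (hg₀ : ∀ i x, 0 ≤ g i x) (hq : ∀ i, 0 ≤ q i)
    (hC : ∀ k i, ∫ x, f k x * g i x ∂μ ≤ C k * q i) :
    ∃ W : X → ℝ, Continuous W ∧ (∀ k x, f k x ≠ 0 → 0 < W x) ∧
      ∀ i, ∫ x, W x * g i x ∂μ ≤ q i := by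
  have := Encodable.ofCountable κ
  obtain ⟨ε, hε, c, hεc, hc⟩ := posSumOfEncodable one_pos κ
  set b : κ → ℝ := fun k ↦ ε k / (1 + |C k|)
  have hb₀ (k) : 0 < b k := div_pos (hε k) (by positivity)
  have hbε (k) : b k ≤ ε k := div_le_self (hε k).le (by linarith [abs_nonneg (C k)])
  have hbC (k) : b k * C k ≤ ε k := by
    rw [div_mul_eq_mul_div, div_le_iff₀ (by positivity)]
    exact mul_le_mul_of_nonneg_left (by linarith [le_abs_self (C k)]) (hε k).le
  have hterm₀ (k x) : 0 ≤ b k * f k x := mul_nonneg (hb₀ k).le (hf_mem k x).1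
  have hterm (k x) : ‖b k * f k x‖ ≤ ε k := by
    rw [Real.norm_of_nonneg (hterm₀ k x)]
    exact (mul_le_of_le_one_right (hb₀ k).le (hf_mem k x).2).trans (hbε k)
  refine ⟨fun x ↦ ∑' k, b k * f k x, continuous_tsum (fun k ↦ (hf k).const_mul _) hεc.summable
    hterm, fun k x hk ↦ ?_, fun i ↦ ?_⟩
  · exact (hεc.summable.of_norm_bounded (hterm · x)).tsum_pos (hterm₀ · x) k
      (mul_pos (hb₀ k) ((hf_mem k x).1.lt_of_ne' hk))
  have hint (k) : Integrable (fun x ↦ b k * f k x * g i x) μ :=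
    (hg i).bdd_mul ((hf k).const_mul _).aestronglyMeasurable (Eventually.of_forall (hterm k))
  have hle (k) : ∫ x, b k * f k x * g i x ∂μ ≤ ε k * q i := by
    simp only [mul_assoc (b k), integral_const_mul]
    calc b k * ∫ x, f k x * g i x ∂μ ≤ b k * (C k * q i) := by gcongr; exacts [(hb₀ k).le, hC k i]
      _ = b k * C k * q i := by ring
      _ ≤ ε k * q i := by gcongr; exacts [hq i, hbC k]
  have hnorm (k) : ∫ x, ‖b k * f k x * g i x‖ ∂μ = ∫ x, b k * f k x * g i x ∂μ :=
    integral_congr_ae <| Eventually.of_forall fun x ↦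
      Real.norm_of_nonneg (mul_nonneg (hterm₀ k x) (hg₀ i x))
  have hsum : Summable fun k ↦ ∫ x, ‖b k * f k x * g i x‖ ∂μ :=
    (hεc.summable.mul_right (q i)).of_nonneg_of_le
      (fun k ↦ integral_nonneg fun x ↦ norm_nonneg _) fun k ↦ (hnorm k).trans_le (hle k)
  have hW := hasSum_integral_of_summable_integral_norm hint hsum
  simp only [tsum_mul_right] at hW
  exact (hasSum_le hle hW (hεc.mul_right (q i))).trans (mul_le_of_le_one_left (hq i) hc)

lemma exists_continuous_pos_forall_integral_mul_le [PerfectlyNormalSpace X] {s : Set X}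
    (hs : IsLindelof s) (hg : ∀ i, Integrable (g i) μ) (hg₀ : ∀ i x, 0 ≤ g i x)
    (hq : ∀ i, 0 ≤ q i)
    (hloc : ∀ x ∈ s, ∃ U ∈ 𝓝 x, ∃ C, ∀ i, ∫ y in U, g i y ∂μ ≤ C * q i) :
    ∃ W : X → ℝ, Continuous W ∧ (∀ x ∈ s, 0 < W x) ∧ ∀ i, ∫ x, W x * g i x ∂μ ≤ q i := by
  choose! U hU C hC using hloc
  obtain ⟨t, ht, hts, hst⟩ := hs.elim_nhds_subcover (fun x ↦ interior (U x))
    fun x hx ↦ interior_mem_nhds.2 (hU x hx)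
  have := ht.to_subtype
  choose f hf hf_mem using fun k : t ↦ perfectlyNormalSpace_iff_forall_isClosed_preimage_zero.1
    ‹_› (interior (U k))ᶜ isOpen_interior.isClosed_compl
  have hf_zero (k x) : f k x = 0 ↔ x ∉ interior (U k) := (Set.ext_iff.1 (hf k) x).symm
  have hle (k x i) : f k x * g i x ≤ (interior (U k)).indicator (g i) x := by
    by_cases hx : x ∈ interior (U k)
    · simpa [hx] using mul_le_of_le_one_left (hg₀ i x) (hf_mem k x).2
    · simp [hx, (hf_zero k x).2 hx]
  have hfC (k : t) (i) : ∫ x, f k x * g i x ∂μ ≤ C k * q i :=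
    calc ∫ x, f k x * g i x ∂μ ≤ ∫ x in interior (U k), g i x ∂μ := by
          rw [← integral_indicator isOpen_interior.measurableSet]
          exact integral_mono_of_nonneg
            (Eventually.of_forall fun x ↦ mul_nonneg (hf_mem k x).1 (hg₀ i x))
            ((hg i).indicator isOpen_interior.measurableSet)
            (Eventually.of_forall fun x ↦ hle k x i)
      _ ≤ ∫ x in U k, g i x ∂μ := setIntegral_mono_set (hg i).integrableOn
          (Eventually.of_forall (hg₀ i)) interior_subset.eventuallyLE
      _ ≤ C k * q i := hC k (hts k k.2) i
  obtain ⟨W, hW, hW_pos, hW_le⟩ :=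
    exists_continuous_forall_integral_mul_le (fun k ↦ (f k).continuous) hf_mem hg hg₀ hq hfC
  refine ⟨W, hW, fun x hx ↦ ?_, hW_le⟩
  obtain ⟨z, hz, hxz⟩ := mem_iUnion₂.1 (hst hx)
  exact hW_pos ⟨z, hz⟩ x fun h ↦ (hf_zero ⟨z, hz⟩ x).1 h hxz

end Weight

lemma exists_pos_measure_sep_le_ne_zero {α : Type*} [MeasurableSpace α] {μ : Measure α}
    {s : Set α} {f : α → ℝ} (h : μ {x ∈ s | 0 < f x} ≠ 0) :
    ∃ c, 0 < c ∧ μ {x ∈ s | c ≤ f x} ≠ 0 := by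
  have hsub : {x ∈ s | 0 < f x} ⊆ ⋃ n : ℕ, {x ∈ s | 1 / ((n : ℝ) + 1) ≤ f x} := by
    rintro x ⟨hxs, hx⟩
    obtain ⟨n, hn⟩ := exists_nat_one_div_lt hx
    exact mem_iUnion.2 ⟨n, hxs, hn.le⟩
  by_contra! hnull
  exact h (measure_mono_null hsub (measure_iUnion_null fun n ↦ hnull _ (by positivity)))

lemma isOpen_setOf_exists_mem_nhds {X : Type*} [TopologicalSpace X] (P : Set X → Prop) :
    IsOpen {x | ∃ U ∈ 𝓝 x, P U} :=
  isOpen_iff_mem_nhds.2 fun _ ⟨U, hU, hPU⟩ ↦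
    (eventually_mem_nhds_iff.2 hU).mono fun _ hy ↦ ⟨U, hy, hPU⟩

section SpectralGap

variable {d : ℕ} {Ω : Set (Euc d)} {V V₁ V₂ u : Euc d → ℝ} {x : Euc d} {p c : ℝ}

lemma IsTestFun.energyQ_add_setIntegral_sub (hu : IsTestFun Ω u) (hp : 0 < p)
    (hV₁ : LocBddPotential Ω V₁) (hV₂ : LocBddPotential Ω V₂) :
    energyQ Ω V₁ p u + ∫ x in Ω, (V₂ x - V₁ x) * |u x| ^ p = energyQ Ω V₂ p u := by
  rw [hu.setIntegral_mul_abs_rpow_eq hp, hu.energyQ_eq hp hV₁, hu.energyQ_eq hp hV₂]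
  simp only [sub_mul]
  rw [integral_sub (hu.integrable_potential_mul hp hV₂) (hu.integrable_potential_mul hp hV₁)]
  ring

lemma EnergyNonneg.mono (hQ : EnergyNonneg Ω V₁ p) (hp : 0 < p) (hV₁ : LocBddPotential Ω V₁)
    (hV₂ : LocBddPotential Ω V₂) (hle : ∀ᵐ x ∂volume.restrict Ω, V₁ x ≤ V₂ x) :
    EnergyNonneg Ω V₂ p := fun u hu ↦ by
  rw [← hu.energyQ_add_setIntegral_sub hp hV₁ hV₂]
  exact add_nonneg (hQ u hu) <| integral_nonneg_of_ae <| hle.mono fun x hx ↦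
    mul_nonneg (sub_nonneg.2 hx) (by positivity)

lemma EnergyNonneg.energyControls_sep_le_sub (hQ : EnergyNonneg Ω V₁ p) (hp : 0 < p)
    (hΩ : MeasurableSet Ω) (hV₁ : LocBddPotential Ω V₁) (hV₂ : LocBddPotential Ω V₂)
    (hle : ∀ᵐ x ∂volume.restrict Ω, V₁ x ≤ V₂ x) (hc : 0 < c) :
    EnergyControls Ω V₂ p {x ∈ Ω | c ≤ V₂ x - V₁ x} := by
  refine ⟨c⁻¹, inv_pos.2 hc, fun u hu ↦ ?_⟩
  have hint : Integrable fun x ↦ (V₂ x - V₁ x) * |u x| ^ p := by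
    simp only [sub_mul]
    exact (hu.integrable_potential_mul hp hV₂).sub (hu.integrable_potential_mul hp hV₁)
  have hmeas : MeasurableSet {x ∈ Ω | c ≤ V₂ x - V₁ x} :=
    hΩ.inter (measurableSet_le measurable_const (hV₂.1.sub hV₁.1))
  rw [← div_eq_inv_mul, le_div_iff₀' hc, ← integral_const_mul]
  calc ∫ x in {x ∈ Ω | c ≤ V₂ x - V₁ x}, c * |u x| ^ p
      ≤ ∫ x in {x ∈ Ω | c ≤ V₂ x - V₁ x}, (V₂ x - V₁ x) * |u x| ^ p :=
        setIntegral_mono_on ((hu.integrable_abs_rpow hp).const_mul c).integrableOn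
          hint.integrableOn hmeas fun x hx ↦ mul_le_mul_of_nonneg_right hx.2 (by positivity)
    _ ≤ ∫ x in Ω, (V₂ x - V₁ x) * |u x| ^ p :=
        setIntegral_mono_set hint.integrableOn
          (hle.mono fun x hx ↦ mul_nonneg (sub_nonneg.2 hx) (by positivity))
          (sep_subset Ω _).eventuallyLE
    _ ≤ energyQ Ω V₂ p u := by
        rw [← hu.energyQ_add_setIntegral_sub hp hV₁ hV₂]
        exact le_add_of_nonneg_left (hQ u hu)

lemma EnergyNonneg.exists_mem_nhds_energyControls (hQ : EnergyNonneg Ω V p)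
    (hV : LocBddPotential Ω V) (hp : 1 < p) (hx : Ω ∈ 𝓝 x)
    (h : ∀ U ∈ 𝓝 x, ∃ E ⊆ U, volume E ≠ 0 ∧ EnergyControls Ω V p E) :
    ∃ U ∈ 𝓝 x, EnergyControls Ω V p U := by
  obtain ⟨r, hr, hrΩ⟩ := nhds_basis_closedBall.mem_iff.1 hx
  obtain ⟨E, hE, hE₀, hEQ⟩ := h (ball x (r / 8)) (ball_mem_nhds x (by positivity))
  exact ⟨_, ball_mem_nhds x (by positivity), hQ.energyControls_ball hV hp (by positivity)
    (by rwa [mul_div_cancel₀ _ (by norm_num)]) hE hE₀ hEQ⟩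

lemma EnergyNonneg.forall_exists_mem_nhds_energyControls (hQ : EnergyNonneg Ω V p)
    (hV : LocBddPotential Ω V) (hp : 1 < p) (hΩ : IsOpen Ω) (hΩ' : IsPreconnected Ω)
    (hx : x ∈ Ω) (h : ∃ U ∈ 𝓝 x, EnergyControls Ω V p U) :
    ∀ y ∈ Ω, ∃ U ∈ 𝓝 y, EnergyControls Ω V p U := by
  have hopen := isOpen_setOf_exists_mem_nhds (EnergyControls Ω V p)
  refine hΩ'.subset_of_closure_inter_subset hopen ⟨x, hx, h⟩ ?_
  rintro y ⟨hy, hyΩ⟩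
  refine hQ.exists_mem_nhds_energyControls hV hp (hΩ.mem_nhds hyΩ) fun U hU ↦ ?_
  obtain ⟨z, hzU, T, hT, hTQ⟩ := mem_closure_iff_nhds.1 hy _ (interior_mem_nhds.2 hU)
  exact ⟨U ∩ T, inter_subset_left,
    (Measure.measure_pos_of_mem_nhds volume (inter_mem (mem_interior_iff_mem_nhds.1 hzU) hT)).ne',
    hTQ.mono (by linarith) inter_subset_right⟩

lemma EnergyNonneg.exists_mem_nhds_energyControls_of_measure_ne_zero {F : Set (Euc d)}
    (hQ : EnergyNonneg Ω V p) (hV : LocBddPotential Ω V) (hp : 1 < p) (hΩ : IsOpen Ω)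
    (hF : F ⊆ Ω) (hF₀ : volume F ≠ 0) (hFQ : EnergyControls Ω V p F) :
    ∃ x ∈ Ω, ∃ U ∈ 𝓝 x, EnergyControls Ω V p U := by
  obtain ⟨x, hx, hpos⟩ := exists_mem_forall_mem_nhdsWithin_pos_measure hF₀
  exact ⟨x, hF hx, hQ.exists_mem_nhds_energyControls hV hp (hΩ.mem_nhds (hF hx)) fun U hU ↦
    ⟨U ∩ F, inter_subset_left,
      (hpos _ (inter_mem (mem_nhdsWithin_of_mem_nhds hU) self_mem_nhdsWithin)).ne',
      hFQ.mono (by linarith) inter_subset_right⟩⟩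

lemma EnergyNonneg.hasSpectralGap (hQ : EnergyNonneg Ω V p) (hp : 0 < p)
    (hloc : ∀ x ∈ Ω, ∃ U ∈ 𝓝 x, EnergyControls Ω V p U) : HasSpectralGap Ω V p := by
  have hloc' (x) (hx : x ∈ Ω) : ∃ U ∈ 𝓝 x, ∃ C, ∀ u : {u // IsTestFun Ω u},
      ∫ y in U, |u.1 y| ^ p ≤ C * energyQ Ω V p u :=
    let ⟨U, hU, C, _, hC⟩ := hloc x hx
    ⟨U, hU, C, fun u ↦ hC u u.2⟩
  obtain ⟨W, hW, hW_pos, hW_le⟩ := exists_continuous_pos_forall_integral_mul_le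
    (ι := {u // IsTestFun Ω u}) (g := fun u x ↦ |u.1 x| ^ p)
    (HereditarilyLindelofSpace.isLindelof Ω) (fun u ↦ u.2.integrable_abs_rpow hp)
    (fun u x ↦ by positivity) (fun u ↦ hQ u u.2) hloc'
  refine ⟨W, hW.continuousOn, hW_pos, fun u hu ↦ ?_⟩
  rw [hu.setIntegral_mul_abs_rpow_eq hp]
  exact hW_le ⟨u, hu⟩

end SpectralGap

theorem spectralGap_of_potential_mono_general {d : ℕ} {Ω : Set (Euc d)} (hΩo : IsOpen Ω)
    (hΩc : IsPreconnected Ω) {p : ℝ} (hp₁ : 1 < p) {V₁ V₂ : Euc d → ℝ}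
    (hV₁ : LocBddPotential Ω V₁) (hV₂ : LocBddPotential Ω V₂)
    (hle : ∀ᵐ x ∂volume.restrict Ω, V₁ x ≤ V₂ x) (hlt : 0 < volume {x ∈ Ω | V₁ x < V₂ x})
    (hQ₁ : EnergyNonneg Ω V₁ p) : HasSpectralGap Ω V₂ p := by
  have hp₀ : 0 < p := by linarith
  have hQ₂ : EnergyNonneg Ω V₂ p := hQ₁.mono hp₀ hV₁ hV₂ hle
  obtain ⟨c, hc, hc_measure⟩ : ∃ c, 0 < c ∧ volume {x ∈ Ω | c ≤ V₂ x - V₁ x} ≠ 0 :=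
    exists_pos_measure_sep_le_ne_zero (by simpa only [sub_pos] using hlt.ne')
  have hcontrol : EnergyControls Ω V₂ p {x ∈ Ω | c ≤ V₂ x - V₁ x} :=
    hQ₁.energyControls_sep_le_sub hp₀ hΩo.measurableSet hV₁ hV₂ hle hc
  obtain ⟨x, hx, hx_control⟩ : ∃ x ∈ Ω, ∃ U ∈ 𝓝 x, EnergyControls Ω V₂ p U :=
    hQ₂.exists_mem_nhds_energyControls_of_measure_ne_zero hV₂ hp₁ hΩo (sep_subset Ω _)
      hc_measure hcontrol
  exact hQ₂.hasSpectralGap hp₀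
    (hQ₂.forall_exists_mem_nhds_energyControls hV₂ hp₁ hΩo hΩc hx hx_control)

/-- **Strict monotonicity in the potential.** If `V₁ ≤ V₂` a.e. on `Ω`, the set where
`V₁ < V₂` has positive measure, and `Q_{V₁} ≥ 0` on test functions, then `Q_{V₂}` has
a weighted spectral gap in `Ω`. -/
theorem spectralGap_of_potential_mono {d : ℕ} (hd : 2 ≤ d)
    (Ω : Set (Euc d)) (hΩo : IsOpen Ω) (hΩc : IsConnected Ω)
    {p : ℝ} (hp₁ : 1 < p) (V₁ V₂ : Euc d → ℝ)
    (hV₁ : LocBddPotential Ω V₁) (hV₂ : LocBddPotential Ω V₂)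
    (hle : ∀ᵐ x ∂(volume.restrict Ω), V₁ x ≤ V₂ x)
    (hlt : 0 < volume {x ∈ Ω | V₁ x < V₂ x})
    (hQ₁ : ∀ u : Euc d → ℝ, IsTestFun Ω u → 0 ≤ energyQ Ω V₁ p u) :
    HasSpectralGap Ω V₂ p :=
  spectralGap_of_potential_mono_general hΩo hΩc.isPreconnected hp₁ hV₁ hV₂ hle hlt hQ₁
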